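/- arXiv:1110.5627 — 2 statements merged into one kernel-verified Lean document; each statement's English description precedes it below -/
import Mathlib

section
/- Let g be a finite-dimensional real Lie algebra with a norm. The quotient group P(g)/P(g)₀, equipped with the quotient topology induced from the supremum-norm topology on P(g) = C([0,1], g), is a simply connected topological group. -/
/-- `IsLieBracket B` says that the bilinear map `B = ⁅·,·⁆` makes the
(finite-dimensional, normed) real vector space `g` into a real Lie algebra:
it is alternating and satisfies the Jacobi identity (in Leibniz form). -/
def IsLieBracket {g : Type*} [NormedAddCommGroup g] [NormedSpace ℝ g]
    (B : g →ₗ[ℝ] g →ₗ[ℝ] g) : Prop :=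
  (∀ x : g, B x x = 0) ∧
  (∀ x y z : g, B x (B y z) = B (B x y) z + B y (B x z))

/-- The adjoint endomorphism `ad x = ⁅x, ·⁆` as a continuous linear map. -/
noncomputable def adL {g : Type*} [NormedAddCommGroup g] [NormedSpace ℝ g]
    [FiniteDimensional ℝ g] (B : g →ₗ[ℝ] g →ₗ[ℝ] g) (x : g) : g →L[ℝ] g :=
  LinearMap.toContinuousLinearMap (B x)

/-- `IsTransport B γ A` says that `A : [0,1] → End(g)` is a continuously
differentiable path of linear endomorphisms of `g` with `A 0 = id` and
`A' t = ad (γ t) ∘ A t` for `t ∈ [0,1]` (one-sided derivatives at the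
endpoints, and the derivative is continuous on `[0,1]`). -/
def IsTransport {g : Type*} [NormedAddCommGroup g] [NormedSpace ℝ g]
    [FiniteDimensional ℝ g] (B : g →ₗ[ℝ] g →ₗ[ℝ] g)
    (γ : ℝ → g) (A : ℝ → (g →L[ℝ] g)) : Prop :=
  A 0 = 1 ∧
  (∀ t ∈ Set.Icc (0:ℝ) 1,
    HasDerivWithinAt A ((adL B (γ t)).comp (A t)) (Set.Icc (0:ℝ) 1) t) ∧
  ContinuousOn (fun t => (adL B (γ t)).comp (A t)) (Set.Icc (0:ℝ) 1)

/-- The path `A_γ : [0,1] → End(g)`, i.e. the unique continuously differentiable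
solution of `A 0 = id`, `A' t = ad (γ t) ∘ A t` (chosen via choice; for a
continuous path `γ` it exists and is unique on `[0,1]`). -/
noncomputable def transport {g : Type*} [NormedAddCommGroup g] [NormedSpace ℝ g]
    [FiniteDimensional ℝ g] (B : g →ₗ[ℝ] g →ₗ[ℝ] g) (γ : ℝ → g) :
    ℝ → (g →L[ℝ] g) :=
  letI := Classical.propDecidable (∃ A : ℝ → (g →L[ℝ] g), IsTransport B γ A)
  if h : ∃ A : ℝ → (g →L[ℝ] g), IsTransport B γ A then h.choose else fun _ => 1

/-- Extension of a continuous path `[0,1] → g` to all of `ℝ` (constant outside `[0,1]`). -/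
noncomputable def pathExt {g : Type*} [TopologicalSpace g]
    (γ : C(Set.Icc (0:ℝ) 1, g)) : ℝ → g :=
  Set.IccExtend zero_le_one ⇑γ

/-- The Duistermaat–Kolk multiplication of paths: `(γ · δ)(t) = γ t + A_γ(t) (δ t)`,
as a `g`-valued function on `[0,1]`. -/
noncomputable def pathMul {g : Type*} [NormedAddCommGroup g] [NormedSpace ℝ g]
    [FiniteDimensional ℝ g] (B : g →ₗ[ℝ] g →ₗ[ℝ] g)
    (γ δ : C(Set.Icc (0:ℝ) 1, g)) : Set.Icc (0:ℝ) 1 → g :=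
  fun t => γ t + transport B (pathExt γ) t (δ t)

/-- The Duistermaat–Kolk inversion of paths: `ι(γ)(t) = -A_γ(t)⁻¹ (γ t)`,
as a `g`-valued function on `[0,1]`. -/
noncomputable def pathInv {g : Type*} [NormedAddCommGroup g] [NormedSpace ℝ g]
    [FiniteDimensional ℝ g] (B : g →ₗ[ℝ] g →ₗ[ℝ] g)
    (γ : C(Set.Icc (0:ℝ) 1, g)) : Set.Icc (0:ℝ) 1 → g :=
  fun t => -(Ring.inverse (transport B (pathExt γ) t) (γ t))

/-- `InPathZero B γ` says that `γ` belongs to the subset `P(g)₀` of the path group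
`P(g) = C([0,1], g)`: there is a continuously differentiable family
`Γ : [0,1] → P(g)` (with derivative `Γ'`) joining the constant path `0` to `γ`
such that `∫₀¹ A_{Γ s}(t)⁻¹ (Γ' s (t)) dt = 0` for all `s ∈ [0,1]`. -/
noncomputable def InPathZero {g : Type*} [NormedAddCommGroup g] [NormedSpace ℝ g]
    [FiniteDimensional ℝ g] (B : g →ₗ[ℝ] g →ₗ[ℝ] g)
    (γ : C(Set.Icc (0:ℝ) 1, g)) : Prop :=
  ∃ Γ Γ' : ℝ → C(Set.Icc (0:ℝ) 1, g),
    (∀ s ∈ Set.Icc (0:ℝ) 1, HasDerivWithinAt Γ (Γ' s) (Set.Icc (0:ℝ) 1) s) ∧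
    ContinuousOn Γ' (Set.Icc (0:ℝ) 1) ∧
    Γ 0 = 0 ∧ Γ 1 = γ ∧
    ∀ s ∈ Set.Icc (0:ℝ) 1,
      (∫ t in (0:ℝ)..1,
        Ring.inverse (transport B (pathExt (Γ s)) t) (pathExt (Γ' s) t)) = 0

/-- The coset relation of the subgroup `P(g)₀` on the path group
`P(g) = C([0,1], g)`: `γ ∼ δ` iff `γ · ι(δ) ∈ P(g)₀`. -/
noncomputable def pathRel {g : Type*} [NormedAddCommGroup g] [NormedSpace ℝ g]
    [FiniteDimensional ℝ g] (B : g →ₗ[ℝ] g →ₗ[ℝ] g)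
    (γ δ : C(Set.Icc (0:ℝ) 1, g)) : Prop :=
  ∃ ι m : C(Set.Icc (0:ℝ) 1, g),
    (∀ t, ι t = pathInv B δ t) ∧ (∀ t, m t = pathMul B γ ι t) ∧ InPathZero B m

namespace PQ
set_option linter.unusedSectionVars false
open Set Filter Topology MeasureTheory

local notation "𝕀" => Set.Icc (0:ℝ) (1:ℝ)

section Volterra
variable {E : Type*} [NormedAddCommGroup E] [NormedSpace ℝ E] [CompleteSpace E]
variable {F : Type*} [NormedAddCommGroup F] [NormedSpace ℝ F] [CompleteSpace F]
variable {G : Type*} [NormedAddCommGroup G] [NormedSpace ℝ G] [CompleteSpace G]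

theorem pathExt_cont (f : C(𝕀, E)) : Continuous (pathExt f) := by
  unfold pathExt
  exact f.continuous.Icc_extend'

theorem pathExt_mem (f : C(𝕀, E)) {t : ℝ} (ht : t ∈ 𝕀) : pathExt f t = f ⟨t, ht⟩ := by
  unfold pathExt
  exact Set.IccExtend_of_mem _ _ ht

theorem pathExt_coe (f : C(𝕀, E)) (t : 𝕀) : pathExt f t = f t := pathExt_mem f t.2

theorem pathExt_norm (f : C(𝕀, E)) (t : ℝ) : ‖pathExt f t‖ ≤ ‖f‖ := by
  unfold pathExt
  exact f.norm_coe_le_norm _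

theorem prim_hasDerivAt (f : C(𝕀, E)) (t : ℝ) :
    HasDerivAt (fun t => ∫ u in (0:ℝ)..t, pathExt f u) (pathExt f t) t :=
  intervalIntegral.integral_hasDerivAt_right ((pathExt_cont f).intervalIntegrable _ _)
    ((pathExt_cont f).stronglyMeasurableAtFilter _ _) (pathExt_cont f).continuousAt

theorem prim_cont (f : C(𝕀, E)) : Continuous (fun t => ∫ u in (0:ℝ)..t, pathExt f u) :=
  continuous_iff_continuousAt.2 fun t => (prim_hasDerivAt f t).continuousAt

/-- integration operator -/
noncomputable def J : C(𝕀, E) →L[ℝ] C(𝕀, E) :=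
  LinearMap.mkContinuous
    { toFun := fun f => ⟨fun t => ∫ u in (0:ℝ)..(t:ℝ), pathExt f u,
        (prim_cont f).comp continuous_subtype_val⟩
      map_add' := by
        intro f h
        ext t
        simp only [ContinuousMap.coe_mk, ContinuousMap.add_apply]
        rw [← intervalIntegral.integral_add ((pathExt_cont f).intervalIntegrable _ _)
          ((pathExt_cont h).intervalIntegrable _ _)]
        rfl
      map_smul' := by
        intro c f
        ext t
        simp only [ContinuousMap.coe_mk, ContinuousMap.smul_apply, RingHom.id_apply]
        rw [← intervalIntegral.integral_smul]
        rfl } 1 (by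
    intro f
    rw [one_mul, ContinuousMap.norm_le _ (norm_nonneg _)]
    intro t
    have := intervalIntegral.norm_integral_le_of_norm_le_const (a := 0) (b := (t:ℝ))
      (f := pathExt f) (C := ‖f‖) (fun x _ => pathExt_norm f x)
    refine this.trans ?_
    have h1 := t.2.1
    have h2 := t.2.2
    rw [sub_zero, abs_of_nonneg h1]
    nlinarith [norm_nonneg f])

theorem J_apply (f : C(𝕀, E)) (t : 𝕀) : J f t = ∫ u in (0:ℝ)..(t:ℝ), pathExt f u := rfl

theorem J_zero (f : C(𝕀, E)) (h : (0:ℝ) ∈ 𝕀) : J f ⟨0, h⟩ = 0 := by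
  rw [J_apply]; simp

theorem J_norm (f : C(𝕀, E)) (t : 𝕀) : ‖J f t‖ ≤ ∫ u in (0:ℝ)..(t:ℝ), ‖pathExt f u‖ := by
  rw [J_apply]
  exact intervalIntegral.norm_integral_le_integral_norm t.2.1

/-- FTC. -/
theorem ftc (F : ℝ → E) (f : C(𝕀, E))
    (hF : ∀ t : 𝕀, HasDerivWithinAt F (f t) 𝕀 t) (t : 𝕀) : F t = F 0 + J f t := by
  have := intervalIntegral.integral_eq_sub_of_hasDeriv_right_of_le (a := 0) (b := (t:ℝ)) (f := F)
    (f' := pathExt f) t.2.1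
    (fun x hx => ((hF ⟨x, hx.1, hx.2.trans t.2.2⟩).continuousWithinAt).mono
      (Icc_subset_Icc_right t.2.2))
    (fun x hx => by
      have hx' : x ∈ 𝕀 := ⟨hx.1.le, hx.2.le.trans t.2.2⟩
      rw [pathExt_mem f hx']
      refine (hF ⟨x, hx'⟩).mono_of_mem_nhdsWithin ?_
      refine mem_nhdsWithin_of_mem_nhds ?_
      exact Icc_mem_nhds hx.1 (hx.2.trans_le t.2.2))
    ((pathExt_cont f).intervalIntegrable _ _)
  rw [J_apply, this]
  abel

theorem J_hasDeriv (f : C(𝕀, E)) (x : E) (t : 𝕀) :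
    HasDerivWithinAt (pathExt (ContinuousMap.const 𝕀 x + J f)) (f t) 𝕀 t := by
  have h := ((prim_hasDerivAt f t).const_add x).hasDerivWithinAt (s := 𝕀)
  rw [pathExt_coe] at h
  refine h.congr ?_ ?_
  · intro s hs
    rw [pathExt_mem _ hs]; rfl
  · rw [pathExt_coe]; rfl

/-- bilinear maps act pointwise -/
noncomputable def bil (L : E →L[ℝ] F →L[ℝ] G) : C(𝕀, E) →L[ℝ] C(𝕀, F) →L[ℝ] C(𝕀, G) :=
  LinearMap.mkContinuous₂
    (LinearMap.mk₂ ℝ (fun (f : C(𝕀, E)) (h : C(𝕀, F)) =>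
        (⟨fun t => L (f t) (h t), by fun_prop⟩ : C(𝕀, G)))
      (by intros; ext; simp) (by intros; ext; simp) (by intros; ext; simp) (by intros; ext; simp))
    ‖L‖ (by
      intro f h
      rw [ContinuousMap.norm_le _ (by positivity)]
      intro t
      exact (L.le_opNorm₂ _ _).trans (by
        gcongr
        · exact f.norm_coe_le_norm _
        · exact h.norm_coe_le_norm _))

@[simp] theorem bil_apply (L : E →L[ℝ] F →L[ℝ] G) (f : C(𝕀, E)) (h : C(𝕀, F)) (t : 𝕀) :
    bil L f h t = L (f t) (h t) := rfl

/-- product rule -/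
theorem prod_rule (L : E →L[ℝ] F →L[ℝ] G) {f f' : C(𝕀, E)} {h h' : C(𝕀, F)} {x : E} {y : F}
    (hf : f = ContinuousMap.const 𝕀 x + J f') (hh : h = ContinuousMap.const 𝕀 y + J h') :
    bil L f h = ContinuousMap.const 𝕀 (L x y) + J (bil L f' h + bil L f h') := by
  ext t
  have key := ftc (fun t => L (pathExt f t) (pathExt h t)) (bil L f' h + bil L f h') (by
    intro t
    have h1 := J_hasDeriv f' x t
    have h2 := J_hasDeriv h' y t
    rw [← hf] at h1
    rw [← hh] at h2
    have h3 := (L.hasFDerivAt.comp_hasDerivWithinAt (t:ℝ) h1).clm_apply h2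
    simp only [Function.comp_apply, pathExt_coe] at h3
    simpa [pathExt_coe] using h3) t
  have h0 : (0:ℝ) ∈ 𝕀 := ⟨le_rfl, zero_le_one⟩
  simp only [pathExt_coe, pathExt_mem _ h0] at key
  rw [bil_apply, key]
  congr 1
  rw [hf, hh]
  simp only [ContinuousMap.add_apply, ContinuousMap.const_apply, J_zero, add_zero]

theorem volterra_bound (M : C(𝕀, E) →L[ℝ] C(𝕀, E)) (c : ℝ) (hc : 0 ≤ c)
    (hM : ∀ f t, ‖M f t‖ ≤ c * ‖f t‖) (n : ℕ) (f : C(𝕀, E)) (t : 𝕀) :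
    ‖((J ∘L M) ^ n) f t‖ ≤ c ^ n * (t:ℝ) ^ n / n.factorial * ‖f‖ := by
  induction n generalizing t with
  | zero => simpa using f.norm_coe_le_norm t
  | succ n ih =>
    rw [pow_succ']
    change ‖J (M (((J ∘L M) ^ n) f)) t‖ ≤ _
    refine (J_norm _ t).trans ?_
    have h1 : ∫ u in (0:ℝ)..(t:ℝ), ‖pathExt (M (((J ∘L M) ^ n) f)) u‖ ≤
        ∫ u in (0:ℝ)..(t:ℝ), (c * c ^ n / n.factorial * ‖f‖) * u ^ n := by
      refine intervalIntegral.integral_mono_on t.2.1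
        ((pathExt_cont _).norm.intervalIntegrable _ _)
        (Continuous.intervalIntegrable (by fun_prop) _ _) ?_
      intro u hu
      have hu' : u ∈ 𝕀 := ⟨hu.1, hu.2.trans t.2.2⟩
      rw [pathExt_mem _ hu']
      refine (hM _ _).trans ?_
      have := mul_le_mul_of_nonneg_left (ih ⟨u, hu'⟩) hc
      refine this.trans (le_of_eq ?_)
      simp only
      ring
    refine h1.trans (le_of_eq ?_)
    rw [intervalIntegral.integral_const_mul, integral_pow, Nat.factorial_succ]
    push_cast
    have : (n:ℝ) + 1 ≠ 0 := by positivity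
    field_simp
    ring

theorem volterra_unit (M : C(𝕀, E) →L[ℝ] C(𝕀, E)) (c : ℝ) (hc : 0 ≤ c)
    (hM : ∀ f t, ‖M f t‖ ≤ c * ‖f t‖) : IsUnit (1 - J ∘L M) := by
  have hlim := FloorSemiring.tendsto_pow_div_factorial_atTop (K := ℝ) c
  obtain ⟨n, hn⟩ := (hlim.eventually (gt_mem_nhds (zero_lt_one' ℝ))).exists
  have hb : ‖(J ∘L M) ^ n‖ < 1 := by
    refine lt_of_le_of_lt (ContinuousLinearMap.opNorm_le_bound _ (by positivity) ?_) hn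
    intro f
    rw [ContinuousMap.norm_le _ (by positivity)]
    intro t
    refine (volterra_bound M c hc hM n f t).trans ?_
    have : (t:ℝ) ^ n ≤ 1 := pow_le_one₀ t.2.1 t.2.2
    gcongr
    have : 0 ≤ c ^ n := by positivity
    nlinarith
  have hu := isUnit_one_sub_of_norm_lt_one (R := C(𝕀, E) →L[ℝ] C(𝕀, E)) hb
  rw [← mul_neg_geom_sum] at hu
  refine ((Commute.isUnit_mul_iff ?_).1 hu).1
  refine Commute.sum_right _ _ _ fun i _ => ?_
  exact (Commute.pow_right (Commute.sub_left (Commute.one_left _) (Commute.refl _)) i)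

theorem volterra_uniq (M : C(𝕀, E) →L[ℝ] C(𝕀, E)) (c : ℝ) (hc : 0 ≤ c)
    (hM : ∀ f t, ‖M f t‖ ≤ c * ‖f t‖) {w f h : C(𝕀, E)}
    (hf : f = w + J (M f)) (hh : h = w + J (M h)) : f = h := by
  obtain ⟨u, hu⟩ := volterra_unit M c hc hM
  have h1 : (1 - J ∘L M) (f - h) = 0 := by
    have : (1 - J ∘L M) (f - h) = (f - J (M f)) - (h - J (M h)) := by
      simp; abel
    rw [this, sub_eq_iff_eq_add.2 hf, sub_eq_iff_eq_add.2 hh, sub_self]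
  rw [← hu] at h1
  have h2 : ((u⁻¹ : (C(𝕀, E) →L[ℝ] C(𝕀, E))ˣ) : C(𝕀, E) →L[ℝ] C(𝕀, E))
      ((u : C(𝕀, E) →L[ℝ] C(𝕀, E)) (f - h)) = f - h := by
    rw [← mul_apply_eq_comp, Units.inv_mul]; rfl
  rw [h1, map_zero] at h2
  exact (sub_eq_zero.1 h2.symm)

theorem volterra_sol (M : C(𝕀, E) →L[ℝ] C(𝕀, E)) (c : ℝ) (hc : 0 ≤ c)
    (hM : ∀ f t, ‖M f t‖ ≤ c * ‖f t‖) (w : C(𝕀, E)) :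
    Ring.inverse (1 - J ∘L M) w = w + J (M (Ring.inverse (1 - J ∘L M) w)) := by
  have h := Ring.mul_inverse_cancel _ (volterra_unit M c hc hM)
  have h2 : ((1 - J ∘L M) * Ring.inverse (1 - J ∘L M)) w = w := by rw [h]; rfl
  rw [mul_apply_eq_comp] at h2
  simp only [sub_apply] at h2
  exact (sub_eq_iff_eq_add.1 h2)

theorem volterra_smooth {X : Type*} [NormedAddCommGroup X] [NormedSpace ℝ X]
    (M : X →L[ℝ] (C(𝕀, E) →L[ℝ] C(𝕀, E))) (c : X → ℝ) (hc : ∀ x, 0 ≤ c x)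
    (hM : ∀ x f t, ‖M x f t‖ ≤ c x * ‖f t‖) (w : C(𝕀, E)) :
    ContDiff ℝ 1 (fun x => Ring.inverse (1 - J ∘L M x) w) := by
  rw [contDiff_iff_contDiffAt]
  intro x
  obtain ⟨u, hu⟩ := volterra_unit (M x) (c x) (hc x) (hM x)
  have h1 := contDiffAt_ringInverse ℝ (n := 1) (R := C(𝕀, E) →L[ℝ] C(𝕀, E)) u
  rw [hu] at h1
  have h2 : ContDiff ℝ 1 (fun x => 1 - J ∘L M x) := by fun_prop
  exact (h1.comp x h2.contDiffAt).clm_apply contDiffAt_const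

theorem gen_bil_deriv {X Y Z : Type*} [NormedAddCommGroup X] [NormedSpace ℝ X]
    [NormedAddCommGroup Y] [NormedSpace ℝ Y] [NormedAddCommGroup Z] [NormedSpace ℝ Z]
    (L : X →L[ℝ] Y →L[ℝ] Z) {f : ℝ → X} {h : ℝ → Y} {f' : X} {h' : Y} {S : Set ℝ} {s : ℝ}
    (hf : HasDerivWithinAt f f' S s) (hh : HasDerivWithinAt h h' S s) :
    HasDerivWithinAt (fun s => L (f s) (h s)) (L f' (h s) + L (f s) h') S s :=
  (L.hasFDerivAt.comp_hasDerivWithinAt s hf).clm_apply hh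

theorem gen_lin_deriv {X Y : Type*} [NormedAddCommGroup X] [NormedSpace ℝ X]
    [NormedAddCommGroup Y] [NormedSpace ℝ Y]
    (L : X →L[ℝ] Y) {f : ℝ → X} {f' : X} {S : Set ℝ} {s : ℝ}
    (hf : HasDerivWithinAt f f' S s) :
    HasDerivWithinAt (fun s => L (f s)) (L f') S s :=
  L.hasFDerivAt.comp_hasDerivWithinAt s hf

theorem gen_comp_deriv {X Y : Type*} [NormedAddCommGroup X] [NormedSpace ℝ X]
    [NormedAddCommGroup Y] [NormedSpace ℝ Y]
    {Φ : X → Y} (hΦ : ContDiff ℝ 1 Φ) {f : ℝ → X} {f' : X} {S : Set ℝ} {s : ℝ} {x : X}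
    (hx : f s = x)
    (hf : HasDerivWithinAt f f' S s) :
    HasDerivWithinAt (fun s => Φ (f s)) (fderiv ℝ Φ x f') S s := by
  subst hx
  exact ((hΦ.differentiable one_ne_zero _).hasFDerivAt).comp_hasDerivWithinAt s hf

theorem gen_line_deriv {X : Type*} [NormedAddCommGroup X] [NormedSpace ℝ X] (x v : X) (S : Set ℝ)
    (s : ℝ) : HasDerivWithinAt (fun r : ℝ => x + r • v) v S s := by
  have := ((hasDerivAt_id s).smul_const v).const_add x
  simpa using this.hasDerivWithinAt

theorem bil_deriv (L : E →L[ℝ] F →L[ℝ] G) {f : ℝ → C(𝕀, E)} {h : ℝ → C(𝕀, F)} {f' : C(𝕀, E)}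
    {h' : C(𝕀, F)} {S : Set ℝ} {s : ℝ} (hf : HasDerivWithinAt f f' S s)
    (hh : HasDerivWithinAt h h' S s) :
    HasDerivWithinAt (fun s => bil L (f s) (h s)) (bil L f' (h s) + bil L (f s) h') S s :=
  gen_bil_deriv (bil L) hf hh

theorem eval_deriv {f : ℝ → C(𝕀, E)} {f' : C(𝕀, E)}
    {S : Set ℝ} {s : ℝ} (hf : HasDerivWithinAt f f' S s) (t : 𝕀) :
    HasDerivWithinAt (fun s => f s t) (f' t) S s :=
  gen_lin_deriv (ContinuousMap.evalCLM ℝ t : C(𝕀, E) →L[ℝ] E) hf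

theorem bil_cont {X : Type*} [TopologicalSpace X] (L : E →L[ℝ] F →L[ℝ] G) {f : X → C(𝕀, E)}
    {h : X → C(𝕀, F)} (hf : Continuous f) (hh : Continuous h) :
    Continuous (fun s => bil L (f s) (h s)) := by
  fun_prop

theorem lin_deriv (L : C(𝕀, E) →L[ℝ] C(𝕀, F)) {f : ℝ → C(𝕀, E)} {f' : C(𝕀, E)}
    {S : Set ℝ} {s : ℝ} (hf : HasDerivWithinAt f f' S s) :
    HasDerivWithinAt (fun s => L (f s)) (L f') S s :=
  gen_lin_deriv L hf

end Volterra
end PQ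

namespace PQ
set_option linter.unusedSectionVars false
open Set Filter Topology MeasureTheory

local notation "𝕀" => Set.Icc (0:ℝ) (1:ℝ)

section Transport
variable {g : Type*} [NormedAddCommGroup g] [NormedSpace ℝ g] [FiniteDimensional ℝ g]
  [CompleteSpace g]

/-- Endomorphisms of `g`, sealed behind a definition to keep instance search fast. -/
def Eg (g : Type*) [NormedAddCommGroup g] [NormedSpace ℝ g] : Type _ := g →L[ℝ] g

noncomputable instance instEgN : NormedAddCommGroup (Eg g) :=
  inferInstanceAs (NormedAddCommGroup (g →L[ℝ] g))
noncomputable instance instEgS : NormedSpace ℝ (Eg g) :=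
  inferInstanceAs (NormedSpace ℝ (g →L[ℝ] g))
instance instEgC : CompleteSpace (Eg g) := inferInstanceAs (CompleteSpace (g →L[ℝ] g))
instance instEgF : FiniteDimensional ℝ (Eg g) := inferInstanceAs (FiniteDimensional ℝ (g →L[ℝ] g))
instance instEgFun : FunLike (Eg g) g g := inferInstanceAs (FunLike (g →L[ℝ] g) g g)
instance instEgLin : LinearMapClass (Eg g) ℝ g g :=
  { map_add := fun f x y => ContinuousLinearMap.map_add (f : g →L[ℝ] g) x y
    map_smulₛₗ := fun f c x => ContinuousLinearMap.map_smul (f : g →L[ℝ] g) c x }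
instance instEgOne : One (Eg g) := inferInstanceAs (One (g →L[ℝ] g))
/-- the underlying continuous linear map -/
def Eg.toL (a : Eg g) : g →L[ℝ] g := a
@[simp] theorem Eg.toL_apply (a : Eg g) (x : g) : a.toL x = a x := rfl
@[ext] theorem Eg.ext {a b : Eg g} (h : ∀ x, a x = b x) : a = b :=
  ContinuousLinearMap.ext (f := a) (g := b) h
@[simp] theorem Eg.add_apply (a b : Eg g) (x : g) : (a + b) x = a x + b x := rfl
@[simp] theorem Eg.neg_apply (a : Eg g) (x : g) : (-a) x = - a x := rfl
@[simp] theorem Eg.sub_apply (a b : Eg g) (x : g) : (a - b) x = a x - b x := rfl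
@[simp] theorem Eg.zero_apply (x : g) : (0 : Eg g) x = 0 := rfl
@[simp] theorem Eg.one_apply (x : g) : (1 : Eg g) x = x := rfl
@[simp] theorem Eg.smul_apply (c : ℝ) (a : Eg g) (x : g) : (c • a) x = c • a x := rfl
theorem Eg.le_opNorm (a : Eg g) (x : g) : ‖a x‖ ≤ ‖a‖ * ‖x‖ :=
  ContinuousLinearMap.le_opNorm (a : g →L[ℝ] g) x

/-- adjoint map as a continuous linear map -/
noncomputable def adC (B : g →ₗ[ℝ] g →ₗ[ℝ] g) : g →L[ℝ] Eg g :=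
  LinearMap.toContinuousLinearMap (F' := Eg g)
    ((LinearMap.toContinuousLinearMap : (g →ₗ[ℝ] g) ≃ₗ[ℝ] (g →L[ℝ] g)).toLinearMap ∘ₗ B)

theorem adC_eq (B : g →ₗ[ℝ] g →ₗ[ℝ] g) (x : g) : adC B x = adL B x := rfl
@[simp] theorem adC_apply (B : g →ₗ[ℝ] g →ₗ[ℝ] g) (x y : g) : adC B x y = B x y := rfl

/-- bracket as a bilinear continuous map -/
noncomputable def brC (B : g →ₗ[ℝ] g →ₗ[ℝ] g) : g →L[ℝ] g →L[ℝ] g :=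
  LinearMap.toContinuousLinearMap
    ((LinearMap.toContinuousLinearMap : (g →ₗ[ℝ] g) ≃ₗ[ℝ] (g →L[ℝ] g)).toLinearMap ∘ₗ B)
@[simp] theorem brC_apply (B : g →ₗ[ℝ] g →ₗ[ℝ] g) (x y : g) : brC B x y = B x y := rfl

noncomputable def cmp : Eg g →L[ℝ] Eg g →L[ℝ] Eg g := ContinuousLinearMap.compL ℝ g g g
noncomputable def app : Eg g →L[ℝ] g →L[ℝ] g := ContinuousLinearMap.id ℝ (g →L[ℝ] g)

/-- reversed negated composition -/
noncomputable def pmc : Eg g →L[ℝ] Eg g →L[ℝ] Eg g :=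
  -(ContinuousLinearMap.compL ℝ g g g).flip
@[simp] theorem cmp_apply (a b : Eg g) (x : g) : cmp a b x = a (b x) := rfl
@[simp] theorem app_apply (a : Eg g) (x : g) : app a x = a x := rfl
@[simp] theorem pmc_apply (a b : Eg g) (x : g) : pmc a b x = -(b (a x)) := rfl
theorem cmp_norm (a b : Eg g) : ‖cmp a b‖ ≤ ‖a‖ * ‖b‖ :=
  ContinuousLinearMap.opNorm_comp_le (a : g →L[ℝ] g) (b : g →L[ℝ] g)
theorem pmc_eq (a b : Eg g) : pmc a b = - cmp b a := rfl

noncomputable def ac (B : g →ₗ[ℝ] g →ₗ[ℝ] g) : C(𝕀, g) →L[ℝ] C(𝕀, Eg g) :=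
  (adC B).compLeftContinuous ℝ 𝕀
@[simp] theorem ac_apply (B : g →ₗ[ℝ] g →ₗ[ℝ] g) (γ : C(𝕀, g)) (t : 𝕀) :
  ac B γ t = adC B (γ t) := rfl

noncomputable def oneC : C(𝕀, Eg g) := ContinuousMap.const 𝕀 1

noncomputable def U (B : g →ₗ[ℝ] g →ₗ[ℝ] g) (γ : C(𝕀, g)) : C(𝕀, Eg g) :=
  Ring.inverse (1 - J ∘L (bil cmp (ac B γ))) oneC
noncomputable def V (B : g →ₗ[ℝ] g →ₗ[ℝ] g) (γ : C(𝕀, g)) : C(𝕀, Eg g) :=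
  Ring.inverse (1 - J ∘L (bil pmc (ac B γ))) oneC

theorem bdU (a : C(𝕀, Eg g)) (f : C(𝕀, Eg g)) (t : 𝕀) :
    ‖bil cmp a f t‖ ≤ ‖a‖ * ‖f t‖ := by
  rw [bil_apply]
  exact (cmp_norm _ _).trans
    (mul_le_mul_of_nonneg_right (a.norm_coe_le_norm t) (norm_nonneg (f t)))

theorem bdV (a : C(𝕀, Eg g)) (f : C(𝕀, Eg g)) (t : 𝕀) :
    ‖bil pmc a f t‖ ≤ ‖a‖ * ‖f t‖ := by
  rw [bil_apply, pmc_eq, norm_neg, mul_comm]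
  exact (cmp_norm _ _).trans
    (mul_le_mul_of_nonneg_left (a.norm_coe_le_norm t) (norm_nonneg (f t)))

variable (B : g →ₗ[ℝ] g →ₗ[ℝ] g)

theorem U_eq (γ : C(𝕀, g)) : U B γ = ContinuousMap.const 𝕀 1 + J (bil cmp (ac B γ) (U B γ)) :=
  volterra_sol _ ‖ac B γ‖ (norm_nonneg (ac B γ)) (bdU _) _
theorem V_eq (γ : C(𝕀, g)) :
    V B γ = ContinuousMap.const 𝕀 1 + J (bil pmc (ac B γ) (V B γ)) :=
  volterra_sol _ ‖ac B γ‖ (norm_nonneg (ac B γ)) (bdV _) _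

theorem U_uniq (γ : C(𝕀, g)) {w f h : C(𝕀, Eg g)} (hf : f = w + J (bil cmp (ac B γ) f))
    (hh : h = w + J (bil cmp (ac B γ) h)) : f = h :=
  volterra_uniq _ ‖ac B γ‖ (norm_nonneg (ac B γ)) (bdU _) hf hh

theorem VU (γ : C(𝕀, g)) (t : 𝕀) : cmp (V B γ t) (U B γ t) = 1 := by
  have h := prod_rule cmp (V_eq B γ) (U_eq B γ)
  have h0 : bil cmp (bil pmc (ac B γ) (V B γ)) (U B γ) +
      bil cmp (V B γ) (bil cmp (ac B γ) (U B γ)) = 0 := by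
    ext t x
    simp
  rw [h0, map_zero, add_zero] at h
  exact congrArg (fun f => f t) h

@[simp] theorem VU' (γ : C(𝕀, g)) (t : 𝕀) (x : g) : V B γ t (U B γ t x) = x :=
  congrArg (fun f : Eg g => f x) (VU B γ t)

@[simp] theorem UV' (γ : C(𝕀, g)) (t : 𝕀) (x : g) : U B γ t (V B γ t x) = x := by
  have h : (V B γ t).toL.toLinearMap * (U B γ t).toL.toLinearMap = 1 := by
    ext x
    exact VU' B γ t x
  have h2 := mul_eq_one_comm.1 h
  exact congrArg (fun f : g →ₗ[ℝ] g => f x) h2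

theorem inverse_U (γ : C(𝕀, g)) (t : 𝕀) : Ring.inverse (U B γ t).toL = (V B γ t).toL :=
  Ring.inverse_unit (⟨(U B γ t).toL, (V B γ t).toL, ContinuousLinearMap.ext (UV' B γ t),
    ContinuousLinearMap.ext (VU' B γ t)⟩ : (g →L[ℝ] g)ˣ)

theorem isTransport_U (γ : C(𝕀, g)) :
    IsTransport B (pathExt γ) (fun t => (pathExt (U B γ) t).toL) := by
  have h0 : (0:ℝ) ∈ 𝕀 := ⟨le_rfl, zero_le_one⟩
  refine ⟨?_, ?_, ?_⟩
  · have : pathExt (U B γ) 0 = 1 := by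
      rw [pathExt_mem _ h0, U_eq]
      simp only [ContinuousMap.add_apply, ContinuousMap.const_apply, J_zero, add_zero]
    exact this
  · intro t ht
    have := J_hasDeriv (bil cmp (ac B γ) (U B γ)) 1 ⟨t, ht⟩
    rw [← U_eq, bil_apply, ← pathExt_mem _ ht, ← pathExt_mem _ ht] at this
    have h2 : ac B γ ⟨t, ht⟩ = adL B (pathExt γ t) := by
      rw [pathExt_mem _ ht]; rfl
    rw [pathExt_mem _ ht, h2] at this
    exact this
  · have : Continuous fun t => cmp (adC B (pathExt γ t)) (pathExt (U B γ) t) := by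
      have := pathExt_cont γ
      have := pathExt_cont (U B γ)
      fun_prop
    exact this.continuousOn

theorem isTransport_uniq (γ : C(𝕀, g)) (A : ℝ → Eg g)
    (ht : IsTransport B (pathExt γ) (fun t => (A t).toL)) (t : 𝕀) : A t = U B γ t := by
  obtain ⟨h1, h2, h3⟩ := ht
  have h2' : ∀ t ∈ 𝕀, HasDerivWithinAt A (cmp (adC B (pathExt γ t)) (A t)) 𝕀 t := h2
  have h1' : A 0 = 1 := h1
  have hc : ContinuousOn A 𝕀 := fun t ht => (h2' t ht).continuousWithinAt
  set f : C(𝕀, Eg g) := ⟨fun t => A t, hc.domRestrict⟩ with hfdef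
  have hf : f = ContinuousMap.const 𝕀 1 + J (bil cmp (ac B γ) f) := by
    ext1 t
    have := ftc A (bil cmp (ac B γ) f) (by
      intro t
      have := h2' t t.2
      rw [pathExt_coe] at this
      exact this) t
    rw [h1'] at this
    exact this
  exact congrArg (fun f => f t) (U_uniq B γ hf (U_eq B γ))

theorem transport_eq (γ : C(𝕀, g)) (t : 𝕀) : transport B (pathExt γ) t = (U B γ t).toL := by
  have hex : ∃ A : ℝ → (g →L[ℝ] g), IsTransport B (pathExt γ) A := ⟨_, isTransport_U B γ⟩
  have ht : IsTransport B (pathExt γ) (transport B (pathExt γ)) := by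
    unfold transport
    rw [dif_pos hex]
    exact hex.choose_spec
  exact isTransport_uniq B γ (transport B (pathExt γ)) ht t

theorem U_zero : U B 0 = oneC := by
  refine U_uniq B 0 (U_eq B 0) ?_
  simp [oneC]

theorem V_zero : V B 0 = oneC := by
  ext t x
  have := VU' B 0 t x
  rw [U_zero] at this
  simpa [oneC] using this

theorem U_prim_app (γ f f' : C(𝕀, g)) (x : g) (hf : f = ContinuousMap.const 𝕀 x + J f') :
    bil app (U B γ) f = ContinuousMap.const 𝕀 x +
      J (bil app (bil cmp (ac B γ) (U B γ)) f + bil app (U B γ) f') := by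
  have h := prod_rule app (U_eq B γ) hf
  rw [app_apply, Eg.one_apply] at h
  exact h

theorem V_prim_app (γ f f' : C(𝕀, g)) (x : g) (hf : f = ContinuousMap.const 𝕀 x + J f') :
    bil app (V B γ) f = ContinuousMap.const 𝕀 x +
      J (bil app (bil pmc (ac B γ) (V B γ)) f + bil app (V B γ) f') := by
  have h := prod_rule app (V_eq B γ) hf
  rw [app_apply, Eg.one_apply] at h
  exact h

theorem const_prim {E : Type*} [NormedAddCommGroup E] [NormedSpace ℝ E] [CompleteSpace E] (x : E) :
    ContinuousMap.const 𝕀 x = ContinuousMap.const 𝕀 x + J 0 := by simp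

theorem skew (hB : IsLieBracket B) (x y : g) : B x y = - B y x := by
  have h := hB.1 (x + y)
  simp only [map_add, LinearMap.add_apply, hB.1, zero_add, add_zero] at h
  exact eq_neg_of_add_eq_zero_right h

theorem U_auto (hB : IsLieBracket B) (γ : C(𝕀, g)) (t : 𝕀) (x y : g) :
    B (U B γ t x) (U B γ t y) = U B γ t (B x y) := by
  have hx := U_prim_app B γ _ _ x (const_prim x)
  have hy := U_prim_app B γ _ _ y (const_prim y)
  have h1 := prod_rule (brC B) hx hy
  have h2 := V_prim_app B γ _ _ _ h1
  have h0 : ∀ a b : C(𝕀, g), a = 0 → b = ContinuousMap.const 𝕀 (B x y) + J a →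
      b = ContinuousMap.const 𝕀 (B x y) := by
    rintro a b rfl rfl
    simp
  have h3 := h0 _ _ ?_ h2
  · have h4 := congrArg (fun f => U B γ t (f t)) h3
    simpa using h4
  · ext t
    simp
    rw [← map_add, ← hB.2, neg_add_cancel]

/-- group multiplication -/
noncomputable def pm (γ δ : C(𝕀, g)) : C(𝕀, g) := γ + bil app (U B γ) δ
noncomputable def pinv (γ : C(𝕀, g)) : C(𝕀, g) := -(bil app (V B γ) γ)

theorem pm_apply (γ δ : C(𝕀, g)) (t : 𝕀) : pm B γ δ t = γ t + U B γ t (δ t) := rfl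
theorem pinv_apply (γ : C(𝕀, g)) (t : 𝕀) : pinv B γ t = - (V B γ t (γ t)) := rfl

theorem pathMul_eq (γ δ : C(𝕀, g)) (t : 𝕀) : pathMul B γ δ t = pm B γ δ t := by
  rw [pathMul, transport_eq, pm_apply, Eg.toL_apply]
theorem pathInv_eq (γ : C(𝕀, g)) (t : 𝕀) : pathInv B γ t = pinv B γ t := by
  rw [pathInv, transport_eq, inverse_U, pinv_apply, Eg.toL_apply]

theorem U_mul (hB : IsLieBracket B) (γ δ : C(𝕀, g)) :
    U B (pm B γ δ) = bil cmp (U B γ) (U B δ) := by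
  refine U_uniq B (pm B γ δ) (U_eq B _) ?_
  have h := prod_rule cmp (U_eq B γ) (U_eq B δ)
  refine h.trans ?_
  congr 2
  ext t x
  simp [pm_apply, U_auto B hB]

theorem V_mul (hB : IsLieBracket B) (γ δ : C(𝕀, g)) (t : 𝕀) (x : g) :
    V B (pm B γ δ) t x = V B δ t (V B γ t x) := by
  have h := VU' B (pm B γ δ) t (V B δ t (V B γ t x))
  rw [U_mul B hB, bil_apply, cmp_apply, UV', UV'] at h
  exact h

theorem pm_assoc (hB : IsLieBracket B) (a b c : C(𝕀, g)) :
    pm B (pm B a b) c = pm B a (pm B b c) := by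
  ext t
  rw [pm_apply, U_mul B hB]
  simp [pm_apply, add_assoc]

theorem pm_zero (a : C(𝕀, g)) : pm B a 0 = a := by simp [pm]
theorem pm_inv (a : C(𝕀, g)) : pm B a (pinv B a) = 0 := by
  ext t
  simp [pm_apply, pinv_apply]

/-! Smoothness -/
theorem U_smooth : ContDiff ℝ 1 (U B) :=
  volterra_smooth ((bil cmp).comp (ac B)) (fun γ => ‖ac B γ‖) (fun γ => norm_nonneg (ac B γ))
    (fun γ => bdU (ac B γ)) oneC

theorem V_smooth : ContDiff ℝ 1 (V B) :=
  volterra_smooth ((bil pmc).comp (ac B)) (fun γ => ‖ac B γ‖) (fun γ => norm_nonneg (ac B γ))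
    (fun γ => bdV (ac B γ)) oneC

theorem pm_smooth : ContDiff ℝ 1 (fun p : C(𝕀, g) × C(𝕀, g) => pm B p.1 p.2) := by
  have := U_smooth B
  unfold pm
  fun_prop

theorem pinv_cont : Continuous (pinv B) := by
  have := (V_smooth B).continuous
  unfold pinv
  fun_prop

end Transport
end PQ

namespace PQ
set_option linter.unusedSectionVars false
open Set Filter Topology MeasureTheory

local notation "𝕀" => Set.Icc (0:ℝ) (1:ℝ)

section Horizontal
variable {g : Type*} [NormedAddCommGroup g] [NormedSpace ℝ g] [FiniteDimensional ℝ g]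
  [CompleteSpace g]
variable (B : g →ₗ[ℝ] g →ₗ[ℝ] g)

/-- the right end point of the interval -/
def i1 : 𝕀 := ⟨1, zero_le_one, le_rfl⟩

/-- primitive of the left-trivialised velocity -/
noncomputable def Pr (γ v : C(𝕀, g)) : C(𝕀, g) := J (bil app (V B γ) v)
noncomputable def EE (γ v : C(𝕀, g)) : g := Pr B γ v i1

noncomputable def dU (γ v : C(𝕀, g)) : C(𝕀, Eg g) := bil cmp (U B γ) (ac B (Pr B γ v))

theorem dU_eq (hB : IsLieBracket B) (γ v : C(𝕀, g)) :
    dU B γ v = J (bil cmp (ac B v) (U B γ)) + J (bil cmp (ac B γ) (dU B γ v)) := by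
  have hp : ac B (Pr B γ v) = ContinuousMap.const 𝕀 0 + J (ac B (bil app (V B γ) v)) := by
    ext1 t
    simp only [ac_apply, Pr, J_apply, ContinuousMap.add_apply, ContinuousMap.const_apply, zero_add]
    rw [← ContinuousLinearMap.intervalIntegral_comp_comm (adC B)
      ((pathExt_cont _).intervalIntegrable _ _)]
    rfl
  have h := prod_rule cmp (U_eq B γ) hp
  rw [map_zero] at h
  refine h.trans ?_
  rw [← map_add J]
  have h0 : ContinuousMap.const 𝕀 (0 : Eg g) = 0 := rfl
  rw [h0, zero_add]
  congr 1
  rw [add_comm]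
  congr 1
  · ext t x
    simp
    rw [← U_auto B hB]
    simp
  
theorem U_deriv (hB : IsLieBracket B) {Γ : ℝ → C(𝕀, g)} {v : C(𝕀, g)} {S : Set ℝ} {s : ℝ}
    (h : HasDerivWithinAt Γ v S s) :
    HasDerivWithinAt (fun s => U B (Γ s)) (dU B (Γ s) v) S s := by
  set γ := Γ s with hγ
  have key : fderiv ℝ (U B) γ v = dU B γ v := by
    have hline : HasDerivWithinAt (fun r : ℝ => γ + r • v) v univ 0 := gen_line_deriv _ _ _ _
    have hl0 : γ + (0:ℝ) • v = γ := by simp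
    have h1 : HasDerivWithinAt (fun r : ℝ => U B (γ + r • v)) (fderiv ℝ (U B) γ v) univ 0 :=
      gen_comp_deriv (U_smooth B) hl0 hline
    have h2 := (lin_deriv J (bil_deriv cmp (lin_deriv (ac B) hline) h1)).const_add
      (ContinuousMap.const 𝕀 (1 : Eg g))
    have h3 : (fun r : ℝ => U B (γ + r • v)) = fun r => ContinuousMap.const 𝕀 (1 : Eg g) +
        J (bil cmp (ac B (γ + r • v)) (U B (γ + r • v))) := by
      funext r
      exact U_eq B _
    rw [← h3] at h2
    have h4 := (hasDerivWithinAt_univ.1 h1).unique (hasDerivWithinAt_univ.1 h2)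
    rw [hl0, map_add J] at h4
    exact U_uniq B γ h4 (dU_eq B hB γ v)
  rw [← key]
  exact gen_comp_deriv (U_smooth B) hγ.symm h

noncomputable def dpm (γ v k w : C(𝕀, g)) : C(𝕀, g) :=
  v + (bil app (dU B γ v) k + bil app (U B γ) w)

theorem pm_deriv (hB : IsLieBracket B) {Γ k : ℝ → C(𝕀, g)} {v w : C(𝕀, g)} {S : Set ℝ} {s : ℝ}
    (h : HasDerivWithinAt Γ v S s) (hk : HasDerivWithinAt k w S s) :
    HasDerivWithinAt (fun s => pm B (Γ s) (k s)) (dpm B (Γ s) v (k s) w) S s :=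
  h.add (bil_deriv app (U_deriv B hB h) hk)

theorem EE_pm (hB : IsLieBracket B) (γ v k w : C(𝕀, g)) :
    EE B (pm B γ k) (dpm B γ v k w) = V B k i1 (EE B γ v) + EE B k w := by
  have hp : Pr B γ v = ContinuousMap.const 𝕀 0 + J (bil app (V B γ) v) := by
    ext; simp [Pr]
  have h := V_prim_app B k _ _ _ hp
  have h1 := congrArg (fun f => f i1) h
  simp only [bil_apply, app_apply, ContinuousMap.add_apply, ContinuousMap.const_apply,
    zero_add] at h1
  unfold EE
  rw [h1]
  unfold Pr
  rw [← ContinuousMap.add_apply, ← map_add J]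
  congr 2
  ext t
  simp only [bil_apply, app_apply, V_mul B hB, dpm, dU, ContinuousMap.add_apply, map_add,
    cmp_apply, VU', ac_apply, pmc_apply, adC_apply,
    Eg.add_apply, Eg.neg_apply]
  rw [skew B hB (Pr B γ v t) (k t)]
  simp only [Pr, map_neg]
  abel

theorem Pr_cont {X : Type*} [TopologicalSpace X] {Γ v : X → C(𝕀, g)}
    (hΓ : Continuous Γ) (hv : Continuous v) : Continuous (fun x => Pr B (Γ x) (v x)) :=
  J.continuous.comp (bil_cont app ((V_smooth B).continuous.comp hΓ) hv)

theorem dpm_cont {X : Type*} [TopologicalSpace X] {Γ v k w : X → C(𝕀, g)}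
    (hΓ : Continuous Γ) (hv : Continuous v) (hk : Continuous k) (hw : Continuous w) :
    Continuous (fun x => dpm B (Γ x) (v x) (k x) (w x)) := by
  have hU := (U_smooth B).continuous.comp hΓ
  exact hv.add ((bil_cont app (bil_cont cmp hU ((ac B).continuous.comp (Pr_cont B hΓ hv))) hk).add
    (bil_cont app hU hw))

theorem EE_cont {X : Type*} [TopologicalSpace X] {Γ v : X → C(𝕀, g)}
    (hΓ : Continuous Γ) (hv : Continuous v) : Continuous (fun x => EE B (Γ x) (v x)) :=
  (ContinuousEvalConst.continuous_eval_const i1).comp (Pr_cont B hΓ hv)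

/-- C¹ horizontal curve -/
structure Hor (Γ Γ' : ℝ → C(𝕀, g)) : Prop where
  deriv : ∀ s ∈ 𝕀, HasDerivWithinAt Γ (Γ' s) 𝕀 s
  cont : ContinuousOn Γ' 𝕀
  zero : ∀ s ∈ 𝕀, EE B (Γ s) (Γ' s) = 0

theorem EE_integral (γ v : C(𝕀, g)) :
    (∫ t in (0:ℝ)..1, Ring.inverse (transport B (pathExt γ) t) (pathExt v t)) = EE B γ v := by
  unfold EE Pr
  rw [J_apply]
  refine intervalIntegral.integral_congr ?_
  intro t ht
  rw [uIcc_of_le zero_le_one] at ht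
  simp only
  have := transport_eq B γ ⟨t, ht⟩
  simp only at this
  rw [this, inverse_U, pathExt_mem _ ht, pathExt_mem _ ht]
  rfl

theorem inPathZero_iff (γ : C(𝕀, g)) :
    InPathZero B γ ↔ ∃ Γ Γ', Hor B Γ Γ' ∧ Γ 0 = 0 ∧ Γ 1 = γ := by
  constructor
  · rintro ⟨Γ, Γ', h1, h2, h3, h4, h5⟩
    exact ⟨Γ, Γ', ⟨h1, h2, fun s hs => by rw [← EE_integral]; exact h5 s hs⟩, h3, h4⟩
  · rintro ⟨Γ, Γ', ⟨h1, h2, h5⟩, h3, h4⟩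
    exact ⟨Γ, Γ', h1, h2, h3, h4, fun s hs => by rw [EE_integral]; exact h5 s hs⟩

theorem Hor.continuousOn {Γ Γ' : ℝ → C(𝕀, g)} (h : Hor B Γ Γ') : ContinuousOn Γ 𝕀 :=
  fun s hs => (h.deriv s hs).continuousWithinAt

theorem dpm_contOn {S : Set ℝ} {Γ v k w : ℝ → C(𝕀, g)}
    (hΓ : ContinuousOn Γ S) (hv : ContinuousOn v S) (hk : ContinuousOn k S)
    (hw : ContinuousOn w S) : ContinuousOn (fun x => dpm B (Γ x) (v x) (k x) (w x)) S := by
  rw [continuousOn_iff_continuous_domRestrict] at *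
  exact dpm_cont B hΓ hv hk hw

theorem Hor.mul (hB : IsLieBracket B) {Γ Γ' k k' : ℝ → C(𝕀, g)} (h : Hor B Γ Γ')
    (hk : Hor B k k') :
    Hor B (fun s => pm B (Γ s) (k s)) (fun s => dpm B (Γ s) (Γ' s) (k s) (k' s)) where
  deriv s hs := pm_deriv B hB (h.deriv s hs) (hk.deriv s hs)
  cont := dpm_contOn B h.continuousOn h.cont hk.continuousOn hk.cont
  zero s hs := by rw [EE_pm B hB, h.zero s hs, hk.zero s hs, map_zero, add_zero]

theorem EE_zero (γ : C(𝕀, g)) : EE B γ 0 = 0 := by simp [EE, Pr]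

theorem EE_smul (γ v : C(𝕀, g)) (c : ℝ) : EE B γ (c • v) = c • EE B γ v := by simp [EE, Pr]

theorem Hor.const (γ : C(𝕀, g)) : Hor B (fun _ => γ) (fun _ => 0) where
  deriv s _ := hasDerivWithinAt_const _ _ _
  cont := continuousOn_const
  zero s _ := EE_zero B γ

theorem Hor.affine {Γ Γ' : ℝ → C(𝕀, g)} (h : Hor B Γ Γ') (a b : ℝ)
    (hab : ∀ s ∈ 𝕀, a * s + b ∈ 𝕀) :
    Hor B (fun s => Γ (a * s + b)) (fun s => a • Γ' (a * s + b)) where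
  deriv s hs := by
    have h1 : HasDerivWithinAt (fun s : ℝ => a * s + b) a 𝕀 s := by
      simpa using (((hasDerivAt_id s).const_mul a).add_const b).hasDerivWithinAt
    exact (h.deriv _ (hab s hs)).scomp s h1 hab
  cont := by
    refine ContinuousOn.const_smul (h.cont.comp ?_ hab) a
    fun_prop
  zero s hs := by rw [EE_smul, h.zero _ (hab s hs), smul_zero]

theorem Hor.hol (hB : IsLieBracket B) {Γ Γ' : ℝ → C(𝕀, g)} (h : Hor B Γ Γ') :
    U B (Γ 1) i1 = U B (Γ 0) i1 := by
  have hd : ∀ s ∈ 𝕀, HasDerivWithinAt (fun s => U B (Γ s) i1) 0 𝕀 s := by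
    intro s hs
    have h1 := U_deriv B hB (h.deriv s hs)
    have h2 := eval_deriv h1 i1
    have h3 : dU B (Γ s) (Γ' s) i1 = 0 := by
      have := h.zero s hs
      unfold EE at this
      simp [dU, this]
    rw [h3] at h2
    exact h2
  exact constant_of_derivWithin_zero (fun s hs => (hd s hs).differentiableWithinAt)
    (fun s hs => (hd s ⟨hs.1, hs.2.le⟩).derivWithin
      (uniqueDiffOn_Icc zero_lt_one s ⟨hs.1, hs.2.le⟩)) 1 ⟨zero_le_one, le_rfl⟩

end Horizontal
end PQ

namespace PQ
set_option linter.unusedSectionVars false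
set_option linter.unusedVariables false
open Set Filter Topology MeasureTheory

local notation "𝕀" => Set.Icc (0:ℝ) (1:ℝ)

section ODEs
open Metric
open scoped NNReal
theorem small_ode {E : Type*} [NormedAddCommGroup E] [NormedSpace ℝ E] [CompleteSpace E]
    {F : E → E →L[ℝ] E} (hF : ContDiffAt ℝ 1 F 0) {ε : ℝ} (hε : 0 < ε) :
    ∃ η > 0, ∀ c : ℝ → E, ContinuousOn c 𝕀 → (∀ s ∈ 𝕀, ‖c s‖ ≤ η) →
      ∃ y : ℝ → E, y 0 = 0 ∧ ∀ s ∈ 𝕀, HasDerivWithinAt y (F (y s) (c s)) 𝕀 s ∧ ‖y s‖ ≤ ε := by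
  obtain ⟨K, t, ht, hK⟩ := hF.exists_lipschitzOnWith
  have hb : ∀ᶠ x in 𝓝 (0:E), ‖F x‖ < ‖F 0‖ + 1 :=
    hF.continuousAt.norm.eventually (gt_mem_nhds (by simp))
  obtain ⟨a, ha, hball⟩ := Metric.nhds_basis_closedBall.mem_iff.1
    (Filter.inter_mem (Filter.inter_mem ht hb) (closedBall_mem_nhds (0:E) hε))
  set A : ℝ≥0 := ⟨a, ha.le⟩
  set L : ℝ := ‖F 0‖ + 1 with hL
  have hLpos : 0 < L := by positivity
  refine ⟨min 1 (a / L), by positivity, fun c hc hcη => ?_⟩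
  have hpl : IsPicardLindelof (fun s y => F y (c s)) (⟨0, le_rfl, zero_le_one⟩ : 𝕀) (0:E)
      A 0 A K := by
    refine ⟨?_, ?_, ?_, ?_⟩
    · intro s hs
      refine LipschitzOnWith.of_dist_le_mul fun x hx y hy => ?_
      have h1 := hK.dist_le_mul x (hball hx).1.1 y (hball hy).1.1
      rw [dist_eq_norm, ← sub_apply]
      refine (ContinuousLinearMap.le_opNorm _ _).trans ?_
      rw [← dist_eq_norm]
      have h2 : ‖c s‖ ≤ 1 := (hcη s hs).trans (min_le_left _ _)
      calc dist (F x) (F y) * ‖c s‖ ≤ dist (F x) (F y) * 1 := by gcongr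
        _ ≤ _ := by rw [mul_one]; exact h1
    · intro x hx
      exact (F x).continuous.comp_continuousOn hc
    · intro s hs x hx
      refine (ContinuousLinearMap.le_opNorm _ _).trans ?_
      have h1 : ‖F x‖ ≤ L := (hball hx).1.2.le
      have h2 : ‖c s‖ ≤ a / L := (hcη s hs).trans (min_le_right _ _)
      calc ‖F x‖ * ‖c s‖ ≤ L * (a / L) := by gcongr
        _ = a := by field_simp
    · simp
  have hx : (0:E) ∈ closedBall (0:E) ((0:ℝ≥0):ℝ) := by simp
  obtain ⟨α, hα⟩ := ODE.FunSpace.exists_isFixedPt_next hpl hx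
  refine ⟨α.compProj, ?_, fun s hs => ⟨?_, ?_⟩⟩
  · have := α.compProj_val (t := (⟨0, le_rfl, zero_le_one⟩ : 𝕀))
    simp only at this
    rw [this, ← hα, ODE.FunSpace.next_apply₀]
  · refine (ODE.hasDerivWithinAt_picard_Icc (⟨le_rfl, zero_le_one⟩ : (0:ℝ) ∈ 𝕀) hpl.continuousOn_uncurry
      α.continuous_compProj.continuousOn (fun _ ht' ↦ α.compProj_mem_closedBall hpl.mul_max_le)
      0 hs).congr_of_mem ?_ hs
    intro t' ht'
    nth_rw 1 [← hα]
    rw [ODE.FunSpace.compProj_of_mem ht', ODE.FunSpace.next_apply]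
  · have := hball (α.compProj_mem_closedBall hpl.mul_max_le (t := s))
    simpa using this.2
end ODEs
end PQ

namespace PQ
set_option linter.unusedSectionVars false
set_option linter.unusedVariables false
open Set Filter Topology MeasureTheory

local notation "𝕀" => Set.Icc (0:ℝ) (1:ℝ)

section Slice
variable {g : Type*} [NormedAddCommGroup g] [NormedSpace ℝ g] [FiniteDimensional ℝ g]
  [CompleteSpace g]
variable (B : g →ₗ[ℝ] g →ₗ[ℝ] g)

theorem gen_clm_smooth {X Y Z : Type*} [NormedAddCommGroup X] [NormedSpace ℝ X]
    [NormedAddCommGroup Y] [NormedSpace ℝ Y] [NormedAddCommGroup Z] [NormedSpace ℝ Z]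
    (L : Y →L[ℝ] Z) {f : X → Y} (hf : ContDiff ℝ 1 f) : ContDiff ℝ 1 (fun x => L (f x)) :=
  L.contDiff.comp hf

theorem gen_smooth_clm {X Y Z : Type*} [NormedAddCommGroup X] [NormedSpace ℝ X]
    [NormedAddCommGroup Y] [NormedSpace ℝ Y] [NormedAddCommGroup Z] [NormedSpace ℝ Z]
    (L : X →L[ℝ] Y) {f : Y → Z} (hf : ContDiff ℝ 1 f) : ContDiff ℝ 1 (fun x => f (L x)) :=
  hf.comp L.contDiff

/-- constant paths -/
noncomputable def cst : g →L[ℝ] C(𝕀, g) :=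
  LinearMap.mkContinuous
    { toFun := fun x => ContinuousMap.const 𝕀 x
      map_add' := fun x y => rfl
      map_smul' := fun c x => rfl } 1 (by
    intro x
    rw [one_mul]
    exact (ContinuousMap.norm_le _ (norm_nonneg x)).2 fun t => le_rfl)
@[simp] theorem cst_apply (x : g) (t : 𝕀) : cst x t = x := rfl
theorem cst_eq (x : g) : cst x = ContinuousMap.const 𝕀 x := rfl

/-- evaluation -/
noncomputable def evC {E : Type*} [NormedAddCommGroup E] [NormedSpace ℝ E] (t : 𝕀) :
    C(𝕀, E) →L[ℝ] E := ContinuousMap.evalCLM ℝ t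
@[simp] theorem evC_apply {E : Type*} [NormedAddCommGroup E] [NormedSpace ℝ E] (t : 𝕀)
    (f : C(𝕀, E)) : evC t f = f t := rfl

theorem V_fix (γ : C(𝕀, g)) (x : g) (h : ∀ t, B (γ t) x = 0) (t : 𝕀) : V B γ t x = x := by
  have h1 := V_prim_app B γ _ _ x (const_prim x)
  have h0 : bil app (bil pmc (ac B γ) (V B γ)) (ContinuousMap.const 𝕀 x) + bil app (V B γ) 0 = 0 := by
    ext t
    simp [h]
  rw [h0, map_zero, add_zero] at h1
  exact congrArg (fun f => f t) h1

theorem U_fix (γ : C(𝕀, g)) (x : g) (h : ∀ t, B (γ t) x = 0) (t : 𝕀) : U B γ t x = x := by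
  conv_lhs => rw [← V_fix B γ x h t]
  rw [UV']

theorem U_central (γ : C(𝕀, g)) (h : ∀ t x, B (γ t) x = 0) (t : 𝕀) (x : g) :
    U B γ t x = x := U_fix B γ x (fun t => h t x) t

theorem pm_cst_neg (hB : IsLieBracket B) (x : g) : pm B (cst x) (cst (-x)) = 0 := by
  ext t
  rw [pm_apply, cst_apply, cst_apply, U_fix]
  · simp
  · intro t; rw [cst_apply, map_neg, hB.1, neg_zero]

/-- integrated transport of constant paths -/
noncomputable def MM (y : g) : Eg g := J (V B (cst y)) i1

theorem EE_cst (y w : g) : EE B (cst y) (cst w) = MM B y w := by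
  unfold EE Pr MM
  rw [J_apply, J_apply]
  have h := (app.flip w : Eg g →L[ℝ] g).intervalIntegral_comp_comm
    ((pathExt_cont (V B (cst y))).intervalIntegrable (μ := volume) 0 (i1 : ℝ))
  refine Eq.trans ?_ h
  rfl

theorem V_cst_smooth : ContDiff ℝ 1 (fun y : g => V B (cst y)) := by
  have h := gen_smooth_clm (cst (g := g)) (V_smooth B)
  exact h

theorem MM_smooth : ContDiff ℝ 1 (MM B) := by
  have h1 : ContDiff ℝ 1 (fun y : g => V B (cst y)) := V_cst_smooth B
  exact gen_clm_smooth (evC i1) (gen_clm_smooth J h1)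

theorem MM_zero : MM B 0 = 1 := by
  unfold MM
  rw [map_zero, V_zero, J_apply]
  have h : ∀ u, pathExt (oneC : C(𝕀, Eg g)) u = 1 := fun u => rfl
  simp [h, i1]

/-- the vector field operator -/
noncomputable def FF (y : g) : g →L[ℝ] g :=
  -((Ring.inverse (app (MM B y))).comp (app (V B (cst y) i1)))

theorem app_one : app (1 : Eg g) = 1 := rfl

theorem FF_smooth : ContDiffAt ℝ 1 (FF B) 0 := by
  have h1 : ContDiff ℝ 1 (fun y : g => V B (cst y)) := V_cst_smooth B
  have h2 : ContDiff ℝ 1 (fun y : g => app (V B (cst y) i1)) :=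
    gen_clm_smooth app (gen_clm_smooth (evC i1) h1)
  have h3 : ContDiff ℝ 1 (fun y : g => app (MM B y)) := gen_clm_smooth app (MM_smooth B)
  have h4 : ContDiffAt ℝ 1 (fun y : g => Ring.inverse (app (MM B y))) 0 := by
    refine ContDiffAt.comp (g := Ring.inverse) (0:g) ?_ h3.contDiffAt
    rw [MM_zero, app_one]
    exact contDiffAt_ringInverse ℝ (1 : (g →L[ℝ] g)ˣ)
  exact (h4.clm_comp h2.contDiffAt).neg

theorem FF_spec : ∀ᶠ y in 𝓝 (0:g), ∀ w, MM B y (FF B y w) = - V B (cst y) i1 w := by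
  have h3 : ContDiff ℝ 1 (fun y : g => app (MM B y)) := gen_clm_smooth app (MM_smooth B)
  have hu : ∀ᶠ y in 𝓝 (0:g), IsUnit (app (MM B y)) := by
    refine h3.continuous.continuousAt.eventually (Units.isOpen.mem_nhds ?_)
    simp only [MM_zero, app_one]
    exact isUnit_one
  filter_upwards [hu] with y hy w
  have h := Ring.mul_inverse_cancel _ hy
  have h2 := congrArg (fun f : g →L[ℝ] g => f (V B (cst y) i1 w)) h
  simp only [mul_apply_eq_comp, one_apply_eq_self] at h2
  unfold FF
  rw [neg_apply, ContinuousLinearMap.comp_apply, map_neg]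
  exact congrArg Neg.neg h2

theorem EE_small {η : ℝ} (hη : 0 < η) :
    ∀ᶠ γ in 𝓝 (0 : C(𝕀, g)), ∀ s ∈ 𝕀, ‖EE B (s • γ) γ‖ ≤ η := by
  have hc : Continuous (fun p : C(𝕀, g) × C(𝕀, g) => EE B p.1 p.2) :=
    EE_cont B continuous_fst continuous_snd
  have h0 : EE B (0 : C(𝕀, g)) 0 = 0 := EE_zero B 0
  have h1 : ∀ᶠ p : C(𝕀, g) × C(𝕀, g) in 𝓝 (0, 0), ‖EE B p.1 p.2‖ < η := by
    refine hc.norm.continuousAt.eventually (gt_mem_nhds ?_)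
    simpa [h0] using hη
  obtain ⟨δ, hδ, h2⟩ := Metric.eventually_nhds_iff_ball.1 h1
  filter_upwards [Metric.ball_mem_nhds (0 : C(𝕀, g)) hδ] with γ hγ s hs
  refine (h2 (s • γ, γ) ?_).le
  rw [mem_ball_zero_iff] at hγ
  rw [Metric.mem_ball, dist_eq_norm, Prod.norm_def]
  simp only [Prod.fst_sub, Prod.snd_sub, sub_zero]
  refine max_lt ?_ hγ
  rw [norm_smul, Real.norm_of_nonneg hs.1]
  exact (mul_le_of_le_one_left (norm_nonneg γ) hs.2).trans_lt hγ

theorem slice (hB : IsLieBracket B) {ε : ℝ} (hε : 0 < ε) :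
    ∀ᶠ γ in 𝓝 (0 : C(𝕀, g)), ∃ y : g, ‖y‖ < ε ∧
      ∃ Γ Γ', Hor B Γ Γ' ∧ Γ 0 = 0 ∧ Γ 1 = pm B γ (cst y) := by
  obtain ⟨r, hr, hFF⟩ := Metric.eventually_nhds_iff_ball.1
    ((FF_spec B).and ((FF_smooth B).eventually (by simp)))
  have hmin : 0 < min (ε / 2) (r / 2) := by positivity
  obtain ⟨η, hη, hode⟩ := small_ode (FF_smooth B) hmin
  filter_upwards [EE_small B hη] with γ hγ
  obtain ⟨y, hy0, hy⟩ := hode (fun s => EE B (s • γ) γ)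
    (EE_cont B (continuous_id.smul continuous_const) continuous_const).continuousOn hγ
  have hyc : ContinuousOn y 𝕀 := fun s hs => (hy s hs).1.continuousWithinAt
  refine ⟨y 1, ?_, fun s => pm B (s • γ) (cst (y s)), fun s => dpm B (s • γ) γ (cst (y s))
    (cst (FF B (y s) (EE B (s • γ) γ))), ⟨?_, ?_, ?_⟩, ?_, ?_⟩
  · refine (hy 1 ⟨zero_le_one, le_rfl⟩).2.trans_lt ?_
    refine (min_le_left _ _).trans_lt (by linarith)
  · intro s hs
    refine pm_deriv B hB ?_ ?_
    · have := gen_line_deriv (0 : C(𝕀, g)) γ 𝕀 s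
      simpa only [zero_add] using this
    · exact gen_lin_deriv cst (hy s hs).1
  · have hEc : ContinuousOn (fun s : ℝ => EE B (s • γ) γ) 𝕀 :=
      (EE_cont B (continuous_id.smul continuous_const) continuous_const).continuousOn
    have hFc : ContinuousOn (fun s : ℝ => FF B (y s) (EE B (s • γ) γ)) 𝕀 := by
      refine ContinuousOn.clm_apply (fun s hs => ?_) hEc
      have h := (hFF (y s) (by
        rw [mem_ball_zero_iff]
        exact (hy s hs).2.trans_lt ((min_le_right _ _).trans_lt (by linarith)))).2
      exact h.continuousAt.comp_continuousWithinAt (hyc s hs)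
    exact dpm_contOn B (continuous_id.smul continuous_const).continuousOn continuousOn_const
      (cst.continuous.comp_continuousOn hyc) (cst.continuous.comp_continuousOn hFc)
  · intro s hs
    rw [EE_pm B hB, EE_cst, (hFF (y s) ?_).1, add_neg_cancel]
    rw [mem_ball_zero_iff]
    refine (hy s hs).2.trans_lt ((min_le_right _ _).trans_lt (by linarith))
  · simp [hy0, pm_zero]
  · simp
end Slice
end PQ

namespace PQ
set_option linter.unusedSectionVars false
set_option linter.unusedVariables false
open Set Filter Topology MeasureTheory

local notation "𝕀" => Set.Icc (0:ℝ) (1:ℝ)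

section Grp
variable {g : Type*} [NormedAddCommGroup g] [NormedSpace ℝ g] [FiniteDimensional ℝ g]
  [CompleteSpace g]
variable (B : g →ₗ[ℝ] g →ₗ[ℝ] g)

theorem U_cst_exp (x : g) : (U B (cst x) i1).toL = NormedSpace.exp (adL B x) := by
  have h : IsTransport B (pathExt (cst x)) (fun t : ℝ => NormedSpace.exp (t • adL B x)) := by
    have hd : ∀ t : ℝ, HasDerivAt (fun t : ℝ => NormedSpace.exp (t • adL B x))
        (adL B x * NormedSpace.exp (t • adL B x)) t := fun t =>
      hasDerivAt_exp_smul_const' (adL B x) t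
    have hx : ∀ t, pathExt (cst x) t = x := fun t => rfl
    refine ⟨by simp, fun t _ => ?_, ?_⟩
    · rw [hx]
      exact (hd t).hasDerivWithinAt
    · simp only [hx]
      have hc : Continuous (fun t : ℝ => NormedSpace.exp (t • adL B x)) :=
        continuous_iff_continuousAt.2 fun t => (hd t).continuousAt
      exact (continuous_const.clm_comp hc).continuousOn
  have h2 := isTransport_uniq B (cst x) (fun t : ℝ => (NormedSpace.exp (t • adL B x) : g →L[ℝ] g)) h i1
  have h3 : U B (cst x) i1 = NormedSpace.exp ((1:ℝ) • adL B x) := h2.symm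
  rw [one_smul] at h3
  exact h3

theorem ad_locInj : ∃ ε > 0, ∀ x y : g, ‖x‖ < ε → ‖y‖ < ε →
    U B (cst x) i1 = U B (cst y) i1 → ∀ w, B (x - y) w = 0 := by
  have h0 : HasStrictFDerivAt (NormedSpace.exp : (g →L[ℝ] g) → (g →L[ℝ] g))
      (1 : (g →L[ℝ] g) →L[ℝ] (g →L[ℝ] g)) 0 := hasStrictFDerivAt_exp_zero
  have h1 := h0.isLittleO.def (c := 1/2) (by norm_num)
  have hcont : Continuous (fun x : g => adL B x) := by
    have h := gen_clm_smooth app (adC B).contDiff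
    exact h.continuous
  have hc2 : Tendsto (fun p : g × g => (adL B p.1, adL B p.2)) (𝓝 (0,0)) (𝓝 (0,0)) := by
    have h : Continuous (fun p : g × g => (adL B p.1, adL B p.2)) := by fun_prop
    have h' := h.tendsto (0,0)
    have hz : adL B 0 = 0 := by ext; simp [adL]
    simpa only [hz] using h'
  obtain ⟨ε, hε, h2⟩ := Metric.eventually_nhds_iff_ball.1 (hc2.eventually h1)
  refine ⟨ε, hε, fun x y hx hy hxy w => ?_⟩
  have h3 := h2 (x, y) (by
    rw [Metric.mem_ball, dist_eq_norm, Prod.norm_def]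
    simpa using ⟨hx, hy⟩)
  have h4 : NormedSpace.exp (adL B x) = NormedSpace.exp (adL B y) := by
    rw [← U_cst_exp, ← U_cst_exp, hxy]
  simp only [h4, sub_self, zero_sub, norm_neg, one_apply_eq_self] at h3
  have h5 : adL B x - adL B y = 0 := by
    rw [← norm_le_zero_iff]; linarith [norm_nonneg (adL B x - adL B y)]
  have h6 := congrArg (fun f : g →L[ℝ] g => f w) h5
  rw [map_sub]
  exact h6

variable {B}
/-- the path group -/
def PG (hB : IsLieBracket B) : Type _ := C(𝕀, g)
variable (hB : IsLieBracket B)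

instance : TopologicalSpace (PG hB) := inferInstanceAs (TopologicalSpace C(𝕀, g))
noncomputable instance : Mul (PG hB) := ⟨fun a b => pm B a b⟩
noncomputable instance : Inv (PG hB) := ⟨fun a => pinv B a⟩
noncomputable instance : One (PG hB) := ⟨(0 : C(𝕀, g))⟩
noncomputable instance : Group (PG hB) :=
  Group.ofRightAxioms (pm_assoc B hB) (pm_zero B) (pm_inv B)
instance : IsTopologicalGroup (PG hB) where
  continuous_mul := (pm_smooth B).continuous
  continuous_inv := pinv_cont B

theorem PG.mul_def (a b : PG hB) : a * b = pm B a b := rfl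
theorem PG.one_def : (1 : PG hB) = (0 : C(𝕀, g)) := rfl
theorem PG.inv_def (a : PG hB) : a⁻¹ = pinv B a := rfl

instance : SimplyConnectedSpace (PG hB) := by
  have h : SimplyConnectedSpace C(𝕀, g) := inferInstance
  exact h

/-- the normal subgroup -/
noncomputable def NN : Subgroup (PG hB) where
  carrier := {γ | ∃ Γ Γ' : ℝ → C(𝕀, g), Hor B Γ Γ' ∧ Γ 0 = 0 ∧ Γ 1 = γ}
  one_mem' := ⟨fun _ => 0, fun _ => 0, Hor.const B 0, rfl, rfl⟩
  mul_mem' := by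
    rintro a b ⟨Γ, Γ', h, h0, rfl⟩ ⟨k, k', hk, hk0, rfl⟩
    refine ⟨_, _, h.mul B hB hk, ?_, rfl⟩
    simp only [h0, hk0, pm_zero]
  inv_mem' := by
    rintro a ⟨Γ, Γ', h, h0, rfl⟩
    have h1 := (Hor.const B (pinv B (Γ 1))).mul B hB (h.affine B (-1) 1
      (fun s hs => ⟨by linarith [hs.2], by linarith [hs.1]⟩))
    refine ⟨_, _, h1, ?_, ?_⟩
    · simp only [mul_zero, zero_add]
      exact inv_mul_cancel (G := PG hB) (Γ 1)
    · simp [h0, pm_zero]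
      rfl

theorem mem_NN (γ : PG hB) : γ ∈ NN hB ↔ InPathZero B γ := (inPathZero_iff B γ).symm

instance NN_normal : (NN hB).Normal where
  conj_mem := by
    rintro a ⟨Γ, Γ', h, h0, rfl⟩ b
    have h1 := ((Hor.const B b).mul B hB h).mul B hB (Hor.const B (pinv B b))
    refine ⟨_, _, h1, ?_, rfl⟩
    simp only [h0]
    have e1 : pm B (show C(𝕀, g) from b) 0 = b := pm_zero B b
    exact (congrArg (fun c => pm B c (pinv B b)) e1).trans (pm_inv B b)

theorem NN_pathConn : IsPathConnected (NN hB : Set (PG hB)) := by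
  refine ⟨1, (NN hB).one_mem, ?_⟩
  rintro a ⟨Γ, Γ', h, h0, rfl⟩
  have hc : ContinuousOn (fun s => (Γ s : PG hB)) 𝕀 := h.continuousOn B
  refine ⟨⟨⟨fun s => Γ s, hc.domRestrict⟩, h0, rfl⟩, ?_⟩
  intro s
  refine ⟨_, _, h.affine B s 0 (fun r hr => ⟨by simpa using mul_nonneg s.2.1 hr.1,
    by simpa using mul_le_one₀ s.2.2 hr.1 hr.2⟩), ?_, ?_⟩
  · simp [h0]
  · have e1 : (s:ℝ) * 1 + 0 = s := by ring
    exact congrArg Γ e1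

theorem NN_hol (γ : PG hB) (h : γ ∈ NN hB) : U B γ i1 = 1 := by
  obtain ⟨Γ, Γ', h, h0, rfl⟩ := h
  rw [h.hol B hB, h0, U_zero]; rfl

theorem cl_hol (γ : PG hB) (h : γ ∈ (NN hB).topologicalClosure) : U B γ i1 = 1 := by
  have hc : Continuous (fun γ : C(𝕀, g) => U B γ i1) :=
    (ContinuousEvalConst.continuous_eval_const i1).comp (U_smooth B).continuous
  have hcl : IsClosed {γ : PG hB | U B γ i1 = 1} := isClosed_eq hc continuous_const
  exact closure_minimal (NN_hol hB) hcl h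

/-- exponential-like map -/
noncomputable def ee (x : g) : PG hB := (cst x : C(𝕀, g))
theorem ee_cont : Continuous (ee hB) := (cst (g := g)).continuous
theorem ee_zero : ee hB 0 = 1 := (cst (g := g)).map_zero
theorem ee_inv (x : g) : (ee hB x)⁻¹ = ee hB (-x) :=
  inv_eq_of_mul_eq_one_right (pm_cst_neg B hB x)

theorem ee_add (z y : g) (hz : ∀ w, B z w = 0) : ee hB (z + y) = ee hB z * ee hB y := by
  have h : (cst (z + y) : C(𝕀, g)) = pm B (cst z) (cst y) := ?_
  · exact h
  refine ContinuousMap.ext fun t => ?_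
  rw [pm_apply]
  rw [U_central B _ (fun t w => by rw [cst_apply]; exact hz w)]
  rfl

theorem U_pm_i1 (hB : IsLieBracket B) (γ δ : C(𝕀, g)) : U B (pm B γ δ) i1 = cmp (U B γ i1) (U B δ i1) := by
  rw [U_mul B hB]; rfl

theorem ee_locInj : ∃ ε > 0, ∀ x y : g, ‖x‖ < ε → ‖y‖ < ε →
    (ee hB x) * (ee hB y)⁻¹ ∈ (NN hB).topologicalClosure →
    (∀ w, B (x - y) w = 0) ∧ ee hB (x - y) ∈ (NN hB).topologicalClosure := by
  obtain ⟨ε, hε, h⟩ := ad_locInj B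
  refine ⟨ε, hε, fun x y hx hy hxy => ?_⟩
  have hc : ∀ w, B (x - y) w = 0 := by
    refine h x y hx hy ?_
    have h1 := cl_hol hB _ hxy
    have h2 : ee hB x = (ee hB x * (ee hB y)⁻¹) * ee hB y := by group
    have h3 := U_pm_i1 hB (ee hB x * (ee hB y)⁻¹) (ee hB y)
    have h4 : U B (ee hB x) i1 = U B (pm B (ee hB x * (ee hB y)⁻¹) (ee hB y)) i1 := by
      conv_lhs => rw [h2]
      rfl
    have h5 : cmp (1 : Eg g) (U B (ee hB y) i1) = U B (ee hB y) i1 := rfl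
    rw [h3, h1, h5] at h4
    exact h4
  refine ⟨hc, ?_⟩
  have h2 := ee_add hB (x - y) y hc
  rw [sub_add_cancel] at h2
  rw [h2, mul_inv_cancel_right] at hxy
  exact hxy

theorem sliceG {ε : ℝ} (hε : 0 < ε) :
    ∀ᶠ γ in 𝓝 (1 : PG hB), ∃ x : g, ‖x‖ < ε ∧ ∃ h ∈ NN hB, γ = h * ee hB x := by
  have h := slice B hB hε
  refine (show ∀ᶠ γ in 𝓝 (1 : PG hB), _ from h).mono ?_
  rintro γ ⟨y, hy, Γ, Γ', hH, h0, h1⟩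
  refine ⟨-y, by simpa using hy, (show PG hB from γ) * ee hB y, ⟨Γ, Γ', hH, h0, h1⟩, ?_⟩
  rw [← ee_inv, mul_inv_cancel_right]

end Grp
end PQ

namespace PQ
set_option linter.unusedSectionVars false
set_option linter.unusedVariables false
open Set Filter Topology MeasureTheory

section T2
variable {X Y : Type*} [TopologicalSpace X] [TopologicalSpace Y]

open Classical in
theorem simplyConnected_of_inducing {q : X → Y} (hq : IsInducing q) (hs : Function.Surjective q)
    [SimplyConnectedSpace Y] : SimplyConnectedSpace X := by
  choose r hr using hs
  rw [simply_connected_iff_loops_nullhomotopic]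
  constructor
  · obtain ⟨y0⟩ : Nonempty Y := inferInstance
    refine ⟨⟨r y0⟩, fun x y => ?_⟩
    let p : Path (q x) (q y) := PathConnectedSpace.somePath _ _
    refine ⟨⟨⟨fun s => if s = 0 then x else if s = 1 then y else r (p s), ?_⟩, ?_, ?_⟩⟩
    · rw [hq.continuous_iff]
      convert p.continuous using 1
      ext s
      simp only [Function.comp_apply]
      split_ifs with h1 h2
      · rw [h1, p.source]
      · rw [h2, p.target]
      · exact hr _
    · simp
    · simp
  · intro x p
    obtain ⟨F⟩ := SimplyConnectedSpace.paths_homotopic (p.map hq.continuous) (Path.refl (q x))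
    refine ⟨⟨⟨⟨fun z => if z.1 = 0 then p z.2 else if z.1 = 1 ∨ z.2 = 0 ∨ z.2 = 1 then x
      else r (F z), ?_⟩, ?_, ?_⟩, ?_⟩⟩
    · rw [hq.continuous_iff]
      convert F.continuous using 1
      ext z
      obtain ⟨s, t⟩ := z
      simp only [Function.comp_apply]
      split_ifs with h1 h2
      · rw [h1, F.apply_zero]; rfl
      · rcases h2 with h | h | h
        · rw [h, F.apply_one]; rfl
        · rw [h, F.source]
        · rw [h, F.target]
      · exact hr _
    · intro t; simp
    · intro t; simp
    · intro s t ht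
      rcases ht with h | h
      · subst h; simp
      · rw [mem_singleton_iff] at h; subst h; simp
end T2

section T1
variable {G : Type*} [Group G] [TopologicalSpace G] [IsTopologicalGroup G]

theorem inducing_closure (N : Subgroup G) [N.Normal] :
    ∃ q : G ⧸ N → G ⧸ N.topologicalClosure, IsInducing q ∧ Function.Surjective q := by
  have : N.topologicalClosure.Normal := Subgroup.is_normal_topologicalClosure N
  have hc : ∀ a : G, (QuotientGroup.mk a : G ⧸ N.topologicalClosure) =
      QuotientGroup.map N N.topologicalClosure (MonoidHom.id G) N.le_topologicalClosure
      (QuotientGroup.mk a : G ⧸ N) := fun a => rfl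
  set q := QuotientGroup.map N N.topologicalClosure (MonoidHom.id G) N.le_topologicalClosure
    with hqd
  have hqc : Continuous q := by
    have : Continuous (fun a : G => (QuotientGroup.mk a : G ⧸ N.topologicalClosure)) :=
      continuous_quot_mk
    exact this.quotient_lift _
  have hqo : IsOpenMap q := by
    intro O hO
    have h1 : IsOpen ((QuotientGroup.mk : G → G ⧸ N) ⁻¹' O) := hO.preimage continuous_quot_mk
    have h2 := QuotientGroup.isOpenMap_coe (N := N.topologicalClosure) _ h1
    convert h2 using 1
    ext y
    constructor
    · rintro ⟨x, hx, rfl⟩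
      obtain ⟨a, rfl⟩ := QuotientGroup.mk_surjective x
      exact ⟨a, hx, rfl⟩
    · rintro ⟨a, ha, rfl⟩
      exact ⟨_, ha, rfl⟩
  refine ⟨q, ?_, ?_⟩
  · rw [isInducing_iff]
    refine le_antisymm (continuous_iff_le_induced.1 hqc) ?_
    intro O hO
    rw [isOpen_induced_iff]
    refine ⟨q '' O, hqo O hO, ?_⟩
    refine Subset.antisymm ?_ (subset_preimage_image _ _)
    rintro x ⟨y, hy, hxy⟩
    obtain ⟨a, rfl⟩ := QuotientGroup.mk_surjective x
    obtain ⟨b, rfl⟩ := QuotientGroup.mk_surjective y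
    rw [← hc, ← hc] at hxy
    have h1 : a⁻¹ * b ∈ N.topologicalClosure := QuotientGroup.eq.1 hxy.symm
    have h2 : a⁻¹ * b ∈ closure (N : Set G) := h1
    have ho : IsOpen {n : G | (QuotientGroup.mk (a * n) : G ⧸ N) ∈ O} := by
      apply hO.preimage
      exact continuous_quot_mk.comp (continuous_const.mul continuous_id)
    obtain ⟨n, hn, hnN⟩ := mem_closure_iff.1 h2 _ ho (by
      show (QuotientGroup.mk (a * (a⁻¹ * b)) : G ⧸ N) ∈ O
      rw [mul_inv_cancel_left]; exact hy)
    have h3 : (QuotientGroup.mk (a * n) : G ⧸ N) = QuotientGroup.mk a := 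
      (QuotientGroup.eq.2 (by simpa using hnN)).symm
    have h4 : (QuotientGroup.mk (a * n) : G ⧸ N) ∈ O := hn
    rwa [h3] at h4
  · intro y
    obtain ⟨a, rfl⟩ := QuotientGroup.mk_surjective y
    exact ⟨QuotientGroup.mk a, rfl⟩

theorem lift_path (H : Subgroup G) [H.Normal] (Us : Set (G ⧸ H)) (hU : Us ∈ 𝓝 (1 : G ⧸ H))
    (σ : G ⧸ H → G) (hσ : ContinuousOn σ Us) (hmk : ∀ u ∈ Us, (QuotientGroup.mk (σ u) : G ⧸ H) = u)
    (l : C(unitInterval, G ⧸ H)) : ∃ L : C(unitInterval, G), ∀ s, (QuotientGroup.mk (L s) : G ⧸ H) = l s := by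
  have h1 : Tendsto (fun p : (G ⧸ H) × (G ⧸ H) => p.1⁻¹ * p.2) (𝓝 (1, 1)) (𝓝 1) := by
    have hc : Continuous (fun p : (G ⧸ H) × (G ⧸ H) => p.1⁻¹ * p.2) := by fun_prop
    have := hc.tendsto (1, 1)
    simpa using this
  have h2 : ∀ᶠ p : (G ⧸ H) × (G ⧸ H) in 𝓝 (1,1), p.1⁻¹ * p.2 ∈ Us := h1.eventually hU
  rw [nhds_prod_eq, Filter.eventually_prod_self_iff (r := fun a b : G ⧸ H => a⁻¹ * b ∈ Us)] at h2
  obtain ⟨V0, hV0, hV⟩ := h2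
  obtain ⟨V, hVV, hVo, hV1⟩ := mem_nhds_iff.1 hV0
  obtain ⟨t, ht0, htm, ⟨n, hn⟩, hts⟩ := exists_monotone_Icc_subset_open_cover_unitInterval
    (c := fun s : unitInterval => {s' | (l s)⁻¹ * l s' ∈ V})
    (fun s => hVo.preimage (continuous_const.mul l.continuous))
    (fun s _ => mem_iUnion.2 ⟨s, by simpa using hV1⟩)
  have key : ∀ m, ∃ L : C(unitInterval, G), ∀ s, (QuotientGroup.mk (L s) : G ⧸ H) = l (min s (t m)) := by
    intro m
    induction m with
    | zero =>
      obtain ⟨a, ha⟩ := QuotientGroup.mk_surjective (l 0)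
      refine ⟨ContinuousMap.const _ a, fun s => ?_⟩
      rw [ht0, min_eq_right (show (0:unitInterval) ≤ s from s.2.1)]
      exact ha
    | succ m ih =>
      obtain ⟨L, hL⟩ := ih
      have hin : ∀ s, (l (t m))⁻¹ * l (max (t m) (min s (t (m+1)))) ∈ Us := by
        intro s
        obtain ⟨i, hi⟩ := hts m
        have ha := hi (left_mem_Icc.2 (htm (Nat.le_succ m)))
        have hb := hi (show max (t m) (min s (t (m+1))) ∈ Icc (t m) (t (m+1)) from
          ⟨le_max_left _ _, max_le (htm (Nat.le_succ m)) (min_le_right _ _)⟩)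
        have hc := hV _ (hVV ha) _ (hVV hb)
        simpa [mul_assoc] using hc
      have hcont : Continuous (fun s => L s * (σ 1)⁻¹ *
          σ ((l (t m))⁻¹ * l (max (t m) (min s (t (m+1)))))) := by
        refine (L.continuous.mul continuous_const).mul ?_
        refine hσ.comp_continuous ?_ hin
        exact continuous_const.mul (l.continuous.comp (by fun_prop))
      refine ⟨⟨_, hcont⟩, fun s => ?_⟩
      have h1U : (1 : G ⧸ H) ∈ Us := mem_of_mem_nhds hU
      show ((L s * (σ 1)⁻¹ * σ ((l (t m))⁻¹ * l (max (t m) (min s (t (m+1))))) : G) : G ⧸ H) = _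
      rw [QuotientGroup.mk_mul, QuotientGroup.mk_mul, QuotientGroup.mk_inv, hmk _ (hin s), hmk _ h1U, hL]
      rw [inv_one, mul_one]
      have hle := htm (Nat.le_succ m)
      rcases le_total s (t m) with hs | hs
      · rw [min_eq_left hs, min_eq_left (hs.trans hle), max_eq_left hs]; simp
      · rw [min_eq_right hs, max_eq_right (le_min hs hle)]; simp
  obtain ⟨L, hL⟩ := key n
  refine ⟨L, fun s => ?_⟩
  rw [hL, hn n le_rfl, min_eq_left (show s ≤ (1:unitInterval) from s.2.2)]

theorem quot_simplyConnected [SimplyConnectedSpace G] (H : Subgroup G) [H.Normal]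
    (hpc : IsPathConnected (H : Set G)) (Us : Set (G ⧸ H)) (hU : Us ∈ 𝓝 (1 : G ⧸ H))
    (σ : G ⧸ H → G) (hσ : ContinuousOn σ Us)
    (hmk : ∀ u ∈ Us, (QuotientGroup.mk (σ u) : G ⧸ H) = u) : SimplyConnectedSpace (G ⧸ H) := by
  have hmkc : Continuous (QuotientGroup.mk : G → G ⧸ H) := continuous_quot_mk
  rw [simply_connected_iff_loops_nullhomotopic]
  refine ⟨QuotientGroup.mk_surjective.pathConnectedSpace hmkc, fun x l => ?_⟩
  obtain ⟨L, hL⟩ := lift_path H Us hU σ hσ hmk l.toContinuousMap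
  have hL' : ∀ s, (QuotientGroup.mk (L s) : G ⧸ H) = l s := hL
  have e0 : (QuotientGroup.mk (L 0) : G ⧸ H) = x := by rw [hL', l.source]
  have e1 : (QuotientGroup.mk (L 1) : G ⧸ H) = x := by rw [hL', l.target]
  have hmem : (L 0)⁻¹ * L 1 ∈ H := QuotientGroup.eq.1 (e0.trans e1.symm)
  obtain ⟨k, hk⟩ := hpc.joinedIn 1 H.one_mem _ hmem
  let p1 : Path (L 0) (L 1) := ⟨L, rfl, rfl⟩
  let p2 : Path (L 0) (L 1) := ⟨⟨fun s => L 0 * k s, by fun_prop⟩, by simp, by simp⟩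
  have h1 := (SimplyConnectedSpace.paths_homotopic p1 p2).map ⟨_, hmkc⟩
  have h2 := h1.pathCast e0.symm e1.symm
  convert h2 using 1
  · ext s; exact (hL' s).symm
  · ext s
    show x = QuotientGroup.mk (L 0 * k s)
    rw [← e0]
    exact QuotientGroup.eq.2 (by simpa using hk s)
end T1
end PQ

namespace PQ
set_option linter.unusedSectionVars false
set_option linter.unusedVariables false
open Set Filter Topology MeasureTheory

section Lin
variable {g : Type*} [NormedAddCommGroup g] [NormedSpace ℝ g] [FiniteDimensional ℝ g]

theorem closed_sub (A : AddSubgroup g) (hA : IsClosed (A : Set g)) (C : Submodule ℝ g)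
    (hC : ∀ u ∈ C, (∀ t : ℝ, t • u ∈ A) → u = 0) :
    ∃ δ > 0, ∀ c ∈ C, c ∈ A → ‖c‖ < δ → c = 0 := by
  by_contra hcon
  push Not at hcon
  have h1 : ∀ n : ℕ, ∃ c ∈ C, c ∈ A ∧ ‖c‖ < 1 / ((n:ℝ) + 1) ∧ c ≠ 0 := fun n =>
    hcon _ (by positivity)
  choose c hcC hcA hcn hc0 using h1
  have hlim : Tendsto (fun n => ‖c n‖) atTop (𝓝 0) :=
    squeeze_zero (fun n => norm_nonneg _) (fun n => (hcn n).le) tendsto_one_div_add_atTop_nhds_zero_nat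
  have : ProperSpace g := FiniteDimensional.proper ℝ g
  have hsph : ∀ n, ‖c n‖⁻¹ • c n ∈ Metric.sphere (0:g) 1 := by
    intro n
    have := norm_ne_zero_iff.2 (hc0 n)
    rw [mem_sphere_zero_iff_norm, norm_smul, norm_inv, norm_norm, inv_mul_cancel₀ this]
  obtain ⟨u, hu, f, hf, hfu⟩ := (isCompact_sphere (0:g) 1).tendsto_subseq hsph
  have huC : u ∈ C := by
    have hcl : IsClosed (C : Set g) := C.closed_of_finiteDimensional
    exact hcl.mem_of_tendsto hfu (Eventually.of_forall fun n => C.smul_mem _ (hcC _))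
  have hlim' := hlim.comp hf.tendsto_atTop
  have hut : ∀ t : ℝ, t • u ∈ A := by
    intro t
    have h2 : Tendsto (fun n => ⌊t / ‖c (f n)‖⌋ • c (f n)) atTop (𝓝 (t • u)) := by
      have h3 := hfu.const_smul t
      have h4 : Tendsto (fun n => ⌊t / ‖c (f n)‖⌋ • c (f n) - t • (‖c (f n)‖⁻¹ • c (f n)))
          atTop (𝓝 0) := by
        refine squeeze_zero_norm (fun n => ?_) hlim'
        rw [← Int.cast_smul_eq_zsmul ℝ, smul_smul, ← sub_smul, norm_smul]
        refine mul_le_of_le_one_left (norm_nonneg _) ?_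
        rw [Real.norm_eq_abs, ← div_eq_mul_inv, abs_le]
        constructor
        · linarith [Int.lt_floor_add_one (t / ‖c (f n)‖)]
        · linarith [Int.floor_le (t / ‖c (f n)‖)]
      have h5 := h4.add h3
      simpa using h5
    exact hA.mem_of_tendsto h2 (Eventually.of_forall fun n => A.zsmul_mem (hcA _) _)
  have := hC u huC hut
  rw [mem_sphere_zero_iff_norm, this, norm_zero] at hu
  exact zero_ne_one hu
end Lin

section Str
variable {g : Type*} [NormedAddCommGroup g] [NormedSpace ℝ g] [FiniteDimensional ℝ g]
  [CompleteSpace g]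
variable {B : g →ₗ[ℝ] g →ₗ[ℝ] g} (hB : IsLieBracket B)

theorem structC : ∃ (W C : Submodule ℝ g) (p : g →L[ℝ] g), (∀ x, p x ∈ C) ∧ (∀ x, x - p x ∈ W) ∧
    (∀ x ∈ W, (∀ w, B x w = 0) ∧ ee hB x ∈ (NN hB).topologicalClosure) ∧
    ∃ ε > 0, ∀ c ∈ C, ‖c‖ < ε → (∀ w, B c w = 0) → ee hB c ∈ (NN hB).topologicalClosure → c = 0 := by
  let A : AddSubgroup g :=
    { carrier := {z | (∀ w, B z w = 0) ∧ ee hB z ∈ (NN hB).topologicalClosure}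
      zero_mem' := ⟨fun w => by simp, by rw [ee_zero]; exact one_mem _⟩
      add_mem' := by
        rintro a b ⟨ha, ha'⟩ ⟨hb, hb'⟩
        exact ⟨fun w => by simp [ha, hb], by rw [ee_add hB _ _ ha]; exact mul_mem ha' hb'⟩
      neg_mem' := by
        rintro a ⟨ha, ha'⟩
        exact ⟨fun w => by simp [ha], by rw [← ee_inv hB]; exact inv_mem ha'⟩ }
  have hAcl : IsClosed (A : Set g) := by
    have h1 : IsClosed {z : g | ∀ w, B z w = 0} := by
      rw [ofPred_forall]
      refine isClosed_iInter fun w => ?_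
      have : Continuous (fun z => B z w) := (B.flip w).continuous_of_finiteDimensional
      exact isClosed_eq this continuous_const
    have h2 : IsClosed {z : g | ee hB z ∈ (NN hB).topologicalClosure} :=
      (Subgroup.isClosed_topologicalClosure (NN hB)).preimage (ee_cont hB)
    exact h1.inter h2
  let W : Submodule ℝ g :=
    { carrier := {x | ∀ t : ℝ, t • x ∈ A}
      zero_mem' := fun t => by rw [smul_zero]; exact A.zero_mem
      add_mem' := fun {a b} ha hb t => by rw [smul_add]; exact A.add_mem (ha t) (hb t)
      smul_mem' := fun c x hx t => by rw [smul_smul]; exact hx _ }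
  obtain ⟨C, hWC⟩ := W.exists_isCompl
  have hCW := hWC.symm
  let p : g →L[ℝ] g := LinearMap.toContinuousLinearMap (C.subtype ∘ₗ C.projectionOnto W hCW)
  refine ⟨W, C, p, fun x => (C.projectionOnto W hCW x).2, fun x => ?_, fun x hx => ?_, ?_⟩
  · rw [← Submodule.projectionOnto_apply_eq_zero_iff hCW, map_sub, sub_eq_zero]
    exact (Submodule.projectionOnto_apply_left hCW _).symm
  · have : x ∈ A := by simpa using hx 1
    exact this
  · obtain ⟨δ, hδ, h⟩ := closed_sub A hAcl C (fun u hu ht => by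
      have h1 : u ∈ W ⊓ C := ⟨ht, hu⟩
      rw [hWC.inf_eq_bot] at h1
      simpa using h1)
    exact ⟨δ, hδ, fun c hc hn h1 h2 => h c hc ⟨h1, h2⟩ hn⟩

theorem small_p (p : g →L[ℝ] g) {ε : ℝ} (hε : 0 < ε) : ∃ δ > 0, ∀ x, ‖x‖ < δ → ‖p x‖ < ε := by
  have h : Tendsto p (𝓝 0) (𝓝 0) := by simpa using p.continuous.tendsto 0
  obtain ⟨δ, hδ, h⟩ := Metric.tendsto_nhds_nhds.1 h ε hε
  exact ⟨δ, hδ, fun x hx => by simpa using h (x := x) (by simpa using hx)⟩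

theorem H_pathConn : IsPathConnected ((NN hB).topologicalClosure : Set (PG hB)) := by
  obtain ⟨W, C, p, hpC, hpW, hW, ε, hε, hC⟩ := structC hB
  obtain ⟨ε0, hε0, hinj⟩ := ee_locInj hB
  obtain ⟨δ, hδ, hp⟩ := small_p p hε
  have hle := (NN hB).le_topologicalClosure
  refine ⟨1, one_mem _, ?_⟩
  intro γ hγ
  have hs := sliceG hB (ε := min ε0 δ) (lt_min hε0 hδ)
  have ht : Tendsto (fun n : PG hB => γ * n⁻¹) (𝓝 γ) (𝓝 1) := by
    have hc : Continuous (fun n : PG hB => γ * n⁻¹) := by fun_prop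
    simpa using hc.tendsto γ
  have hγ' : γ ∈ closure (NN hB : Set (PG hB)) := hγ
  obtain ⟨n, hn1, hnN⟩ := mem_closure_iff_nhds.1 hγ' _ (ht.eventually hs)
  obtain ⟨x, hx, h, hh, hx2⟩ : ∃ x : g, ‖x‖ < min ε0 δ ∧ ∃ h ∈ NN hB, γ * n⁻¹ = h * ee hB x := hn1
  have hγe : γ = h * ee hB x * n := by rw [← hx2]; group
  have hxH : ee hB x ∈ (NN hB).topologicalClosure := by
    have : ee hB x = h⁻¹ * γ * n⁻¹ := by rw [hγe]; group
    rw [this]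
    exact mul_mem (mul_mem (inv_mem (hle hh)) hγ) (inv_mem (hle hnN))
  have hx0 : ∀ w, B x w = 0 := by
    have := (hinj x 0 (hx.trans_le (min_le_left _ _)) (by simpa using hε0) (by
      rw [ee_zero, inv_one, mul_one]; exact hxH)).1
    simpa using this
  have hw := hW _ (W.neg_mem (hpW x))
  have hpx : p x = 0 := by
    have e : p x = -(x - p x) + x := by abel
    refine hC _ (hpC x) (hp x (hx.trans_le (min_le_right _ _))) (fun w => ?_) ?_
    · rw [e, map_add, LinearMap.add_apply, hw.1, hx0, add_zero]
    · rw [e, ee_add hB _ _ hw.1]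
      exact mul_mem hw.2 hxH
  have hxW : x ∈ W := by have := hpW x; rwa [hpx, sub_zero] at this
  have hj1 : JoinedIn ((NN hB).topologicalClosure : Set (PG hB)) 1 (h * n) :=
    ((NN_pathConn hB).joinedIn 1 (one_mem _) _ (mul_mem hh hnN)).mono hle
  have hj2 : JoinedIn ((NN hB).topologicalClosure : Set (PG hB)) (h * n) γ := by
    refine ⟨⟨⟨fun s => h * ee hB ((s:ℝ) • x) * n, ?_⟩, ?_, ?_⟩, ?_⟩
    · have h1 : Continuous (fun s : unitInterval => ee hB ((s:ℝ) • x)) :=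
        (ee_cont hB).comp (by fun_prop)
      fun_prop
    · simp [ee_zero]
    · simp [hγe]
    · intro s
      exact mul_mem (mul_mem (hle hh) (hW _ (W.smul_mem _ hxW)).2) (hle hnN)
  exact hj1.trans hj2

instance H_normal : ((NN hB).topologicalClosure).Normal :=
  Subgroup.is_normal_topologicalClosure (NN hB)

theorem H_section : ∃ (Us : Set (PG hB ⧸ (NN hB).topologicalClosure)) (_ : Us ∈ 𝓝 1)
    (σ : PG hB ⧸ (NN hB).topologicalClosure → PG hB), ContinuousOn σ Us ∧
    ∀ u ∈ Us, (QuotientGroup.mk (σ u) : PG hB ⧸ (NN hB).topologicalClosure) = u := by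
  obtain ⟨W, C, p, hpC, hpW, hW, ε, hε, hC⟩ := structC hB
  obtain ⟨ε0, hε0, hinj⟩ := ee_locInj hB
  have hle := (NN hB).le_topologicalClosure
  set H := (NN hB).topologicalClosure with hH
  have hHcl : IsClosed (H : Set (PG hB)) := Subgroup.isClosed_topologicalClosure (NN hB)
  obtain ⟨r, hr, hr0, hr1⟩ : ∃ r > 0, r < ε0 ∧ 2 * r < ε :=
    ⟨min ε0 (ε/2) / 2, by positivity, by linarith [min_le_left ε0 (ε/2), lt_min hε0 (half_pos hε)],
      by linarith [min_le_right ε0 (ε/2), lt_min hε0 (half_pos hε)]⟩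
  obtain ⟨δ, hδ, hp⟩ := small_p p hr
  have : ProperSpace g := FiniteDimensional.proper ℝ g
  let K : Set g := (C : Set g) ∩ Metric.closedBall 0 r
  have hK : IsCompact K := (isCompact_closedBall (0:g) r).inter_left C.closed_of_finiteDimensional
  have : CompactSpace K := isCompact_iff_compactSpace.1 hK
  let φ : K → PG hB ⧸ H := fun c => QuotientGroup.mk (ee hB c)
  have hmkc : Continuous (QuotientGroup.mk : PG hB → PG hB ⧸ H) := continuous_quot_mk
  have hφc : Continuous φ := hmkc.comp ((ee_cont hB).comp continuous_subtype_val)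
  have hφi : Function.Injective φ := by
    rintro ⟨x, hxC, hx⟩ ⟨y, hyC, hy⟩ hxy
    rw [mem_closedBall_zero_iff] at hx hy
    have h1 : (QuotientGroup.mk (ee hB x) : PG hB ⧸ H) = QuotientGroup.mk (ee hB y) := hxy
    have h2 : ee hB x * (ee hB y)⁻¹ ∈ H := by
      rw [← QuotientGroup.eq_one_iff, QuotientGroup.mk_mul, QuotientGroup.mk_inv, h1, mul_inv_cancel]
    obtain ⟨h3, h4⟩ := hinj x y (hx.trans_lt hr0) (hy.trans_lt hr0) h2
    have h5 := hC _ (C.sub_mem hxC hyC)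
      (lt_of_le_of_lt (norm_sub_le x y) (by linarith)) h3 h4
    exact Subtype.ext (sub_eq_zero.1 h5)
  have hemb := hφc.isClosedEmbedding hφi
  refine ⟨range φ, ?_, Function.extend φ (fun c => ee hB c) (fun _ => 1), ?_, ?_⟩
  · have hs := sliceG hB hδ
    have h1 := (QuotientGroup.isOpenMap_coe (N := H)).image_mem_nhds hs
    refine mem_of_superset h1 ?_
    rintro _ ⟨γ, ⟨x, hx, h, hh, rfl⟩, rfl⟩
    refine ⟨⟨p x, hpC x, by rw [mem_closedBall_zero_iff]; exact (hp x hx).le⟩, ?_⟩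
    have hw := hW _ (hpW x)
    have e : ee hB x = ee hB (x - p x) * ee hB (p x) := by
      rw [← ee_add hB _ _ hw.1, sub_add_cancel]
    show (QuotientGroup.mk (ee hB (p x)) : PG hB ⧸ H) = QuotientGroup.mk (h * ee hB x)
    rw [e, QuotientGroup.mk_mul, QuotientGroup.mk_mul, (QuotientGroup.eq_one_iff _).2 (hle hh),
      (QuotientGroup.eq_one_iff _).2 hw.2, one_mul, one_mul]
  · rw [continuousOn_iff_continuous_domRestrict, ← hemb.isEmbedding.toHomeomorph.comp_continuous_iff']
    have : (range φ).domRestrict (Function.extend φ (fun c => ee hB c) (fun _ => 1)) ∘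
        hemb.isEmbedding.toHomeomorph = fun c : K => ee hB c := by
      ext1 c
      exact hφi.extend_apply (fun c => ee hB c) (fun _ => 1) c
    rw [this]
    exact (ee_cont hB).comp continuous_subtype_val
  · rintro _ ⟨c, rfl⟩
    rw [hφi.extend_apply]

theorem main_sc : SimplyConnectedSpace (PG hB ⧸ NN hB) := by
  obtain ⟨Us, hU, σ, hσ, hmk⟩ := H_section hB
  have := quot_simplyConnected (NN hB).topologicalClosure (H_pathConn hB) Us hU σ hσ hmk
  obtain ⟨q, hq, hs⟩ := inducing_closure (NN hB)
  exact simplyConnected_of_inducing hq hs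
end Str
end PQ

namespace PQ
set_option linter.unusedSectionVars false
set_option linter.unusedVariables false
open Set Filter Topology MeasureTheory

local notation "𝕀" => Set.Icc (0:ℝ) (1:ℝ)

section Fin
variable {g : Type*} [NormedAddCommGroup g] [NormedSpace ℝ g] [FiniteDimensional ℝ g]
  [CompleteSpace g]
variable {B : g →ₗ[ℝ] g →ₗ[ℝ] g} (hB : IsLieBracket B)

/-- the identity map, from continuous paths to the path group -/
def toPG (γ : C(𝕀, g)) : PG hB := γ

theorem toPG_mul (γ δ m : C(𝕀, g)) (h : ∀ t, m t = pathMul B γ δ t) :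
    toPG hB m = toPG hB γ * toPG hB δ := by
  have h1 : m = pm B γ δ := ContinuousMap.ext fun t => (h t).trans (pathMul_eq B γ δ t)
  exact h1

theorem toPG_inv (γ m : C(𝕀, g)) (h : ∀ t, m t = pathInv B γ t) :
    toPG hB m = (toPG hB γ)⁻¹ := by
  have h1 : m = pinv B γ := ContinuousMap.ext fun t => (h t).trans (pathInv_eq B γ t)
  exact h1

theorem pathRel_iff (γ δ : C(𝕀, g)) :
    pathRel B γ δ ↔ (QuotientGroup.mk (toPG hB γ) : PG hB ⧸ NN hB) = QuotientGroup.mk (toPG hB δ) := by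
  have h0 : (QuotientGroup.mk (toPG hB γ) : PG hB ⧸ NN hB) = QuotientGroup.mk (toPG hB δ) ↔
      toPG hB γ * (toPG hB δ)⁻¹ ∈ NN hB := by
    rw [← QuotientGroup.eq_one_iff, QuotientGroup.mk_mul, QuotientGroup.mk_inv, mul_inv_eq_one]
  rw [h0]
  constructor
  · rintro ⟨ι, m, h1, h2, h3⟩
    rw [← toPG_inv hB δ ι h1, ← toPG_mul hB γ ι m h2]
    exact (mem_NN hB _).2 h3
  · intro h
    exact ⟨pinv B δ, pm B γ (pinv B δ), fun t => (pathInv_eq B δ t).symm,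
      fun t => (pathMul_eq B γ _ t).symm, (mem_NN hB _).1 h⟩

/-- the quotient of paths is homeomorphic to the quotient group -/
noncomputable def quotHomeo : Quot (pathRel B) ≃ₜ PG hB ⧸ NN hB where
  toFun := Quot.lift (fun γ => QuotientGroup.mk (toPG hB γ)) fun γ δ h => (pathRel_iff hB γ δ).1 h
  invFun := Quotient.lift (fun γ : PG hB => Quot.mk (pathRel B) γ) fun γ δ h =>
    Quot.sound ((pathRel_iff hB γ δ).2 (Quotient.sound h))
  left_inv := by rintro ⟨γ⟩; rfl
  right_inv := by rintro ⟨γ⟩; rfl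
  continuous_toFun := by
    have h : Continuous (fun γ : C(𝕀, g) => (QuotientGroup.mk (toPG hB γ) : PG hB ⧸ NN hB)) := by
      have h1 : Continuous (fun γ : PG hB => (QuotientGroup.mk γ : PG hB ⧸ NN hB)) :=
        continuous_quot_mk
      exact h1
    exact continuous_quot_lift _ h
  continuous_invFun := by
    have h : Continuous (fun γ : PG hB => Quot.mk (pathRel B) γ) := by
      have h1 : Continuous (fun γ : C(𝕀, g) => Quot.mk (pathRel B) γ) := continuous_quot_mk
      exact h1
    exact h.quotient_lift _

theorem quotHomeo_mk (γ : C(𝕀, g)) :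
    quotHomeo hB (Quot.mk _ γ) = QuotientGroup.mk (toPG hB γ) := rfl

theorem quotHomeo_zero : quotHomeo hB (Quot.mk _ 0) = 1 := rfl
end Fin
end PQ

/-- The quotient group `P(g)/P(g)₀`, with the quotient topology induced from the
supremum-norm topology on `P(g) = C([0,1], g)`, is a simply connected topological
group: the path multiplication and inversion descend to the quotient, satisfy the
group axioms with identity the class of the constant path `0`, are continuous,
and the quotient space is simply connected. -/
theorem pathQuotient_simplyConnected_topologicalGroup {g : Type*}
    [NormedAddCommGroup g] [NormedSpace ℝ g] [FiniteDimensional ℝ g]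
    (B : g →ₗ[ℝ] g →ₗ[ℝ] g) (hB : IsLieBracket B) :
    ∃ (mul : Quot (pathRel B) → Quot (pathRel B) → Quot (pathRel B))
      (inv : Quot (pathRel B) → Quot (pathRel B)),
      -- `mul` and `inv` descend the path group operations
      (∀ γ δ m : C(Set.Icc (0:ℝ) 1, g), (∀ t, m t = pathMul B γ δ t) →
        mul (Quot.mk (pathRel B) γ) (Quot.mk (pathRel B) δ) = Quot.mk (pathRel B) m) ∧
      (∀ γ ι : C(Set.Icc (0:ℝ) 1, g), (∀ t, ι t = pathInv B γ t) →
        inv (Quot.mk (pathRel B) γ) = Quot.mk (pathRel B) ι) ∧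
      -- group axioms
      (∀ a b c : Quot (pathRel B), mul (mul a b) c = mul a (mul b c)) ∧
      (∀ a, mul (Quot.mk (pathRel B) 0) a = a) ∧
      (∀ a, mul a (Quot.mk (pathRel B) 0) = a) ∧
      (∀ a, mul (inv a) a = Quot.mk (pathRel B) 0) ∧
      (∀ a, mul a (inv a) = Quot.mk (pathRel B) 0) ∧
      -- the operations are continuous for the quotient topology
      Continuous (fun p : Quot (pathRel B) × Quot (pathRel B) => mul p.1 p.2) ∧
      Continuous inv ∧
      -- and the quotient is simply connected
      SimplyConnectedSpace (Quot (pathRel B)) := by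
  have : CompleteSpace g := FiniteDimensional.complete ℝ g
  let e := PQ.quotHomeo hB
  have he0 : e (Quot.mk _ 0) = 1 := PQ.quotHomeo_zero hB
  refine ⟨fun a b => e.symm (e a * e b), fun a => e.symm (e a)⁻¹, ?_, ?_, ?_, ?_, ?_, ?_, ?_,
    ?_, ?_, ?_⟩
  · intro γ δ m h
    rw [Homeomorph.symm_apply_eq]
    show QuotientGroup.mk (PQ.toPG hB γ) * QuotientGroup.mk (PQ.toPG hB δ) =
      QuotientGroup.mk (PQ.toPG hB m)
    rw [PQ.toPG_mul hB γ δ m h, QuotientGroup.mk_mul]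
  · intro γ m h
    rw [Homeomorph.symm_apply_eq]
    show (QuotientGroup.mk (PQ.toPG hB γ))⁻¹ = QuotientGroup.mk (PQ.toPG hB m)
    rw [PQ.toPG_inv hB γ m h, QuotientGroup.mk_inv]
  · intro a b c
    simp [mul_assoc]
  · intro a
    simp [he0]
  · intro a
    simp [he0]
  · intro a
    rw [Homeomorph.symm_apply_eq, he0]
    simp
  · intro a
    rw [Homeomorph.symm_apply_eq, he0]
    simp
  · have := e.continuous
    have := e.symm.continuous
    fun_prop
  · have := e.continuous
    have := e.symm.continuous
    fun_prop
  · have := PQ.main_sc hB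
    exact e.toHomotopyEquiv.simplyConnectedSpace
end

section
/- (Archimedes; special case of the Duistermaat–Heckman theorem.) The 2-dimensional Hausdorff measure of the unit sphere S = {p ∈ ℝ³ : p₁² + p₂² + p₃² = 1} is equal to the 2-dimensional Hausdorff measure of the lateral surface of the circumscribed cylinder C = {p ∈ ℝ³ : p₁² + p₂² = 1, −1 ≤ p₃ ≤ 1}. -/
open MeasureTheory

namespace Archimedes

open scoped NNReal ENNReal Topology
open Set Filter Measure

abbrev E2 := EuclideanSpace ℝ (Fin 2)
abbrev E3 := EuclideanSpace ℝ (Fin 3)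

/-- If `φ` contracts distances relative to `ψ` up to the factor `K`, then the areas of the images
compare. -/
lemma hausdorff_image_le_of_dist_le {α : Type*} [Nonempty α] (φ ψ : α → E3) (t : Set α) (K : ℝ≥0)
    (h : ∀ y ∈ t, ∀ z ∈ t, dist (φ y) (φ z) ≤ K * dist (ψ y) (ψ z)) :
    μH[2] (φ '' t) ≤ (K : ℝ≥0∞) ^ 2 * μH[2] (ψ '' t) := by
  set k : E3 → E3 := fun p => φ (Function.invFunOn ψ t p) with hk
  have hinv : ∀ p ∈ ψ '' t, Function.invFunOn ψ t p ∈ t ∧ ψ (Function.invFunOn ψ t p) = p :=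
    fun p hp => ⟨Function.invFunOn_mem hp, Function.invFunOn_eq hp⟩
  have himg : φ '' t ⊆ k '' (ψ '' t) := by
    rintro _ ⟨y, hy, rfl⟩
    refine ⟨ψ y, mem_image_of_mem _ hy, ?_⟩
    obtain ⟨h1, h2⟩ := hinv (ψ y) (mem_image_of_mem _ hy)
    have := h _ h1 y hy
    rw [h2, dist_self, mul_zero] at this
    exact dist_le_zero.1 this
  have hlip : LipschitzOnWith K k (ψ '' t) := by
    refine LipschitzOnWith.of_dist_le_mul fun p hp q hq => ?_
    obtain ⟨h1, h2⟩ := hinv p hp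
    obtain ⟨h3, h4⟩ := hinv q hq
    have := h _ h1 _ h3
    rwa [h2, h4] at this
  calc μH[2] (φ '' t) ≤ μH[2] (k '' (ψ '' t)) := measure_mono himg
    _ ≤ (K : ℝ≥0∞) ^ (2 : ℝ) * μH[2] (ψ '' t) := hlip.hausdorffMeasure_image_le (by norm_num)
    _ = _ := by norm_num

lemma linear_image (A : E2 →L[ℝ] E3) (hA : A.toLinearMap.normDet = 1) (t : Set E2) :
    μH[2] (A '' t) = μH[2] t := by
  have := A.toLinearMap.hausdorffMeasure_image t
  simpa [hA] using this

lemma exists_small (A : E2 →L[ℝ] E3) (hA : A.toLinearMap.normDet = 1) {ε : ℝ} (hε : 0 < ε) :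
    ∃ r : ℝ≥0, r ≠ 0 ∧ ∀ v, r * ‖v‖ ≤ ε * ‖A v‖ := by
  have hker : A.toLinearMap.ker = ⊥ := by
    by_contra h
    rw [LinearMap.normDet_eq_zero_iff_ker_ne_bot.2 h] at hA
    norm_num at hA
  obtain ⟨K, K0, hK⟩ := A.toLinearMap.exists_antilipschitzWith hker
  refine ⟨⟨ε / K, by positivity⟩, ?_, fun v => ?_⟩
  · intro h
    have := congrArg NNReal.toReal h
    have h2 : (0 : ℝ) < ε / K := by positivity
    exact h2.ne' this
  · have h1 := hK.le_mul_dist v 0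
    simp only [dist_zero_right, map_zero] at h1
    change ε / K * ‖v‖ ≤ ε * ‖A v‖
    have : (0 : ℝ) < K := by exact_mod_cast K0
    calc ε / K * ‖v‖ ≤ ε / K * (K * ‖A v‖) := by
          gcongr
          exact h1
      _ = _ := by field_simp

lemma image_le_aux (f g : E2 → E3) (f' g' : E2 → E2 →L[ℝ] E3) (s : Set E2) (hs : MeasurableSet s)
    (hf : ∀ x ∈ s, HasFDerivWithinAt f (f' x) s x) (hg : ∀ x ∈ s, HasFDerivWithinAt g (g' x) s x)
    (hf1 : ∀ x ∈ s, (f' x).toLinearMap.normDet = 1) (hg1 : ∀ x ∈ s, (g' x).toLinearMap.normDet = 1)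
    (hinj : InjOn g s) (c : ℝ≥0) (hc : 1 < c) :
    μH[2] (f '' s) ≤ (c : ℝ≥0∞) ^ 4 * μH[2] (g '' s) := by
  rcases s.eq_empty_or_nonempty with rfl | hne
  · simp
  have hc' : (1 : ℝ) < c := by exact_mod_cast hc
  have hε : (0 : ℝ) < 1 - (c : ℝ)⁻¹ := by
    have := inv_lt_one_of_one_lt₀ hc'
    linarith
  have hcc : 1 + (1 - (c : ℝ)⁻¹) ≤ c := by
    have h0 : (0 : ℝ) < c := by linarith
    have h2 : (c : ℝ) * (c : ℝ)⁻¹ = 1 := by field_simp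
    nlinarith [sq_nonneg ((c : ℝ) - 1), inv_pos.2 h0]
  have key : ∀ A : E2 →L[ℝ] E3 × E3, ∃ r : ℝ≥0, r ≠ 0 ∧
      (((ContinuousLinearMap.fst ℝ E3 E3).comp A).toLinearMap.normDet = 1 →
       ((ContinuousLinearMap.snd ℝ E3 E3).comp A).toLinearMap.normDet = 1 →
        ∀ v, r * ‖v‖ ≤ (1 - (c : ℝ)⁻¹) * ‖(A v).1‖ ∧ r * ‖v‖ ≤ (1 - (c : ℝ)⁻¹) * ‖(A v).2‖) := by
    intro A
    by_cases h1 : ((ContinuousLinearMap.fst ℝ E3 E3).comp A).toLinearMap.normDet = 1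
    · by_cases h2 : ((ContinuousLinearMap.snd ℝ E3 E3).comp A).toLinearMap.normDet = 1
      · obtain ⟨r1, h10, hr1⟩ := exists_small _ h1 hε
        obtain ⟨r2, h20, hr2⟩ := exists_small _ h2 hε
        refine ⟨min r1 r2, ?_, fun _ _ v => ⟨?_, ?_⟩⟩
        · exact (lt_min (pos_iff_ne_zero.2 h10) (pos_iff_ne_zero.2 h20)).ne'
        · refine le_trans ?_ (hr1 v)
          gcongr
          exact min_le_left _ _
        · refine le_trans ?_ (hr2 v)
          gcongr
          exact min_le_right _ _
      · exact ⟨1, one_ne_zero, fun _ h => absurd h h2⟩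
    · exact ⟨1, one_ne_zero, fun h => absurd h h1⟩
  choose r hr0 hr using key
  obtain ⟨t, A, tdisj, tmeas, tcov, tapp, tA⟩ :=
    exists_partition_approximatesLinearOn_of_hasFDerivWithinAt (fun x => (f x, g x)) s
      (fun x => (f' x).prod (g' x)) (fun x hx => (hf x hx).prodMk (hg x hx)) r hr0
  have hst : s = ⋃ n, s ∩ t n := by
    rw [← inter_iUnion, inter_eq_left.2 tcov]
  have hpiece : ∀ n, μH[2] (f '' (s ∩ t n)) ≤ (c : ℝ≥0∞) ^ 4 * μH[2] (g '' (s ∩ t n)) := by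
    intro n
    obtain ⟨x, hx, hAx⟩ := tA hne n
    have happ := tapp n
    have hrr := hr (A n) (by rw [hAx]; exact hf1 x hx) (by rw [hAx]; exact hg1 x hx)
    have e1 : μH[2] (f '' (s ∩ t n)) ≤ (c : ℝ≥0∞) ^ 2 * μH[2] (f' x '' (s ∩ t n)) := by
      apply hausdorff_image_le_of_dist_le
      intro y hy z hz
      have h1 := (norm_fst_le _).trans (happ y hy z hz)
      have h2 := (hrr (y - z)).1
      simp only [hAx, ContinuousLinearMap.prod_apply, Prod.fst_sub] at h1 h2
      rw [dist_eq_norm, dist_eq_norm, ← map_sub]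
      have h3 : ‖f y - f z‖ ≤ ‖f' x (y - z)‖ + ‖f y - f z - f' x (y - z)‖ := by
        simpa using norm_add_le (f' x (y - z)) (f y - f z - f' x (y - z))
      nlinarith [norm_nonneg (f' x (y - z))]
    have e2 : μH[2] (g' x '' (s ∩ t n)) ≤ (c : ℝ≥0∞) ^ 2 * μH[2] (g '' (s ∩ t n)) := by
      apply hausdorff_image_le_of_dist_le
      intro y hy z hz
      have h1 := (norm_snd_le _).trans (happ y hy z hz)
      have h2 := (hrr (y - z)).2
      simp only [hAx, ContinuousLinearMap.prod_apply, Prod.snd_sub] at h1 h2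
      rw [dist_eq_norm, dist_eq_norm, ← map_sub]
      have h3 : ‖g' x (y - z)‖ ≤ ‖g y - g z‖ + ‖g y - g z - g' x (y - z)‖ := by
        simpa using norm_sub_le (g y - g z) (g y - g z - g' x (y - z))
      have h4 : (c : ℝ)⁻¹ * ‖g' x (y - z)‖ ≤ ‖g y - g z‖ := by linarith
      rwa [inv_mul_le_iff₀ (by linarith)] at h4
    rw [linear_image _ (hf1 x hx)] at e1
    rw [linear_image _ (hg1 x hx)] at e2
    calc _ ≤ _ := e1
      _ ≤ (c : ℝ≥0∞) ^ 2 * ((c : ℝ≥0∞) ^ 2 * μH[2] (g '' (s ∩ t n))) := by gcongr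
      _ = _ := by ring
  have hgc : ContinuousOn g s := fun x hx => (hg x hx).continuousWithinAt
  calc μH[2] (f '' s) = μH[2] (⋃ n, f '' (s ∩ t n)) := by rw [← image_iUnion, ← hst]
    _ ≤ ∑' n, μH[2] (f '' (s ∩ t n)) := measure_iUnion_le _
    _ ≤ ∑' n, (c : ℝ≥0∞) ^ 4 * μH[2] (g '' (s ∩ t n)) := ENNReal.tsum_le_tsum hpiece
    _ = (c : ℝ≥0∞) ^ 4 * ∑' n, μH[2] (g '' (s ∩ t n)) := ENNReal.tsum_mul_left
    _ = (c : ℝ≥0∞) ^ 4 * μH[2] (⋃ n, g '' (s ∩ t n)) := by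
      rw [measure_iUnion]
      · intro m n hmn
        apply disjoint_image_image
        intro x hx y hy hxy
        have := hinj hx.1 hy.1 hxy
        exact (tdisj hmn).le_bot ⟨hx.2, this ▸ hy.2⟩
      · intro n
        exact (hs.inter (tmeas n)).image_of_continuousOn_injOn (hgc.mono inter_subset_left)
          (hinj.mono inter_subset_left)
    _ = _ := by rw [← image_iUnion, ← hst]

lemma image_le (f g : E2 → E3) (f' g' : E2 → E2 →L[ℝ] E3) (s : Set E2) (hs : MeasurableSet s)
    (hf : ∀ x ∈ s, HasFDerivWithinAt f (f' x) s x) (hg : ∀ x ∈ s, HasFDerivWithinAt g (g' x) s x)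
    (hf1 : ∀ x ∈ s, (f' x).toLinearMap.normDet = 1) (hg1 : ∀ x ∈ s, (g' x).toLinearMap.normDet = 1)
    (hinj : InjOn g s) :
    μH[2] (f '' s) ≤ μH[2] (g '' s) := by
  have h1 : Tendsto (fun c : ℝ≥0 => (c : ℝ≥0∞) ^ 4 * μH[2] (g '' s)) (𝓝[>] 1)
      (𝓝 (((1 : ℝ≥0) : ℝ≥0∞) ^ 4 * μH[2] (g '' s))) := by
    refine ENNReal.Tendsto.mul_const ?_ (Or.inl (by simp))
    have : Continuous fun c : ℝ≥0 => (c : ℝ≥0∞) ^ 4 := by fun_prop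
    exact this.continuousAt.mono_left nhdsWithin_le_nhds
  have h2 := ge_of_tendsto (b := μH[2] (f '' s)) h1 (by
    filter_upwards [self_mem_nhdsWithin] with c hc
    exact image_le_aux f g f' g' s hs hf hg hf1 hg1 hinj c hc)
  simpa using h2

/-- The linear map with columns `a` and `b`. -/
noncomputable def cols (a b : E3) : E2 →L[ℝ] E3 :=
  (EuclideanSpace.proj (0 : Fin 2) : E2 →L[ℝ] ℝ).smulRight a +
    (EuclideanSpace.proj (1 : Fin 2) : E2 →L[ℝ] ℝ).smulRight b

lemma normDet_cols (a b : E3)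
    (h : (a 0 ^ 2 + a 1 ^ 2 + a 2 ^ 2) * (b 0 ^ 2 + b 1 ^ 2 + b 2 ^ 2) -
      (a 0 * b 0 + a 1 * b 1 + a 2 * b 2) ^ 2 = 1) :
    (cols a b).toLinearMap.normDet = 1 := by
  have h1 := (cols a b).toLinearMap.normDet_sq_eq_det_gram (EuclideanSpace.basisFun (Fin 2) ℝ)
  have h2 : ((cols a b).toLinearMap.normDet) ^ 2 = 1 := by
    rw [Matrix.det_fin_two] at h1
    simp only [Matrix.gram_apply, PiLp.inner_apply, Fin.sum_univ_three] at h1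
    simp [cols] at h1
    refine h1.trans ?_
    rw [← h]
    ring
  have h3 := (cols a b).toLinearMap.normDet_nonneg
  nlinarith

noncomputable def sph (x : E2) : E3 :=
  !₂[√(1 - x 1 ^ 2) * Real.cos (x 0), √(1 - x 1 ^ 2) * Real.sin (x 0), x 1]

noncomputable def cyl (x : E2) : E3 := !₂[Real.cos (x 0), Real.sin (x 0), x 1]

noncomputable def sph' (x : E2) : E2 →L[ℝ] E3 :=
  cols !₂[-(√(1 - x 1 ^ 2) * Real.sin (x 0)), √(1 - x 1 ^ 2) * Real.cos (x 0), 0]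
    !₂[-x 1 / √(1 - x 1 ^ 2) * Real.cos (x 0), -x 1 / √(1 - x 1 ^ 2) * Real.sin (x 0), 1]

noncomputable def cyl' (x : E2) : E2 →L[ℝ] E3 :=
  cols !₂[-Real.sin (x 0), Real.cos (x 0), 0] !₂[0, 0, 1]

def dom : Set E2 := {x | x 0 ∈ Ioc (-Real.pi) Real.pi ∧ x 1 ∈ Ioo (-1 : ℝ) 1}

lemma measurableSet_dom : MeasurableSet dom := by
  refine MeasurableSet.inter (s₁ := {x : E2 | x 0 ∈ Ioc (-Real.pi) Real.pi})
    (s₂ := {x : E2 | x 1 ∈ Ioo (-1 : ℝ) 1}) ?_ ?_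
  · exact measurableSet_Ioc.preimage (by fun_prop)
  · exact measurableSet_Ioo.preimage (by fun_prop)

lemma pos_of_dom {x : E2} (hx : x ∈ dom) : 0 < 1 - x 1 ^ 2 := by
  obtain ⟨-, h1, h2⟩ := hx
  nlinarith

lemma hasFDerivAt_coord (x : E2) (i : Fin 2) :
    HasFDerivAt (fun y : E2 => y i) (EuclideanSpace.proj i : E2 →L[ℝ] ℝ) x :=
  (EuclideanSpace.proj i : E2 →L[ℝ] ℝ).hasFDerivAt

lemma hasFDeriv_cyl (x : E2) : HasFDerivWithinAt cyl (cyl' x) dom x := by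
  rw [hasFDerivWithinAt_euclidean]
  have h0 := hasFDerivAt_coord x 0
  have h1 := hasFDerivAt_coord x 1
  intro i
  apply HasFDerivAt.hasFDerivWithinAt
  fin_cases i
  · refine h0.cos.congr_fderiv ?_
    ext v
    simp [cyl', cols]
    try ring
  · refine h0.sin.congr_fderiv ?_
    ext v
    simp [cyl', cols]
    try ring
  · refine h1.congr_fderiv ?_
    ext v
    simp [cyl', cols]

lemma hasFDeriv_sph (x : E2) (hx : x ∈ dom) : HasFDerivWithinAt sph (sph' x) dom x := by
  rw [hasFDerivWithinAt_euclidean]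
  have h0 := hasFDerivAt_coord x 0
  have h1 := hasFDerivAt_coord x 1
  have hp := pos_of_dom hx
  have hq : √(1 - x 1 ^ 2) ≠ 0 := (Real.sqrt_pos.2 hp).ne'
  have hs := ((h1.pow 2).const_sub 1).sqrt hp.ne'
  intro i
  apply HasFDerivAt.hasFDerivWithinAt
  fin_cases i
  · refine (hs.mul h0.cos).congr_fderiv ?_
    ext v
    simp [sph', cols]
    field_simp
    try ring
  · refine (hs.mul h0.sin).congr_fderiv ?_
    ext v
    simp [sph', cols]
    field_simp
    try ring
  · refine h1.congr_fderiv ?_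
    ext v
    simp [sph', cols]

lemma normDet_cyl (x : E2) : (cyl' x).toLinearMap.normDet = 1 := by
  apply normDet_cols
  simp

lemma normDet_sph (x : E2) (hx : x ∈ dom) : (sph' x).toLinearMap.normDet = 1 := by
  apply normDet_cols
  have hp := pos_of_dom hx
  have hq : √(1 - x 1 ^ 2) ≠ 0 := (Real.sqrt_pos.2 hp).ne'
  have h2 := Real.sq_sqrt hp.le
  have h3 := Real.sin_sq_add_cos_sq (x 0)
  simp
  generalize √(1 - x 1 ^ 2) = q at *
  generalize Real.sin (x 0) = S at *
  generalize Real.cos (x 0) = C at *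
  have e1 : (q * S) ^ 2 + (q * C) ^ 2 = q ^ 2 := by linear_combination q ^ 2 * h3
  have e2 : (-x 1 / q * C) ^ 2 + (-x 1 / q * S) ^ 2 + 1 = x 1 ^ 2 / q ^ 2 + 1 := by
    have : (-x 1 / q) ^ 2 = x 1 ^ 2 / q ^ 2 := by ring
    linear_combination (-x 1 / q) ^ 2 * h3 + this
  have e3 : -(q * S * (-x 1 / q * C)) + q * C * (-x 1 / q * S) = 0 := by ring
  rw [e1, e2, e3]
  field_simp
  linarith

lemma angle_inj {a b : ℝ} (ha : a ∈ Ioc (-Real.pi) Real.pi) (hb : b ∈ Ioc (-Real.pi) Real.pi)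
    (hc : Real.cos a = Real.cos b) (hs : Real.sin a = Real.sin b) : a = b := by
  have h := Real.Angle.cos_sin_inj hc hs
  have h1 := Real.Angle.toReal_coe_eq_self_iff.2 ha
  have h2 := Real.Angle.toReal_coe_eq_self_iff.2 hb
  rw [← h1, ← h2, h]

lemma cyl_inj : InjOn cyl dom := by
  intro x hx y hy h
  have e0 := congrArg (fun p : E3 => p 0) h
  have e1 := congrArg (fun p : E3 => p 1) h
  have e2 := congrArg (fun p : E3 => p 2) h
  simp [cyl] at e0 e1 e2
  ext i
  fin_cases i
  · exact angle_inj hx.1 hy.1 e0 e1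
  · exact e2

lemma sph_inj : InjOn sph dom := by
  intro x hx y hy h
  have e0 := congrArg (fun p : E3 => p 0) h
  have e1 := congrArg (fun p : E3 => p 1) h
  have e2 := congrArg (fun p : E3 => p 2) h
  have hq : √(1 - y 1 ^ 2) ≠ 0 := (Real.sqrt_pos.2 (pos_of_dom hy)).ne'
  simp only [sph] at e0 e1 e2
  simp at e2
  simp [e2] at e0 e1
  ext i
  fin_cases i
  · exact angle_inj hx.1 hy.1 (e0.resolve_right hq) (e1.resolve_right hq)
  · exact e2

lemma exists_angle {a b : ℝ} (h : a ^ 2 + b ^ 2 = 1) :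
    ∃ t ∈ Ioc (-Real.pi) Real.pi, Real.cos t = a ∧ Real.sin t = b := by
  have hn : ‖(⟨a, b⟩ : ℂ)‖ = 1 := by
    rw [← sq_eq_sq₀ (norm_nonneg _) zero_le_one, ← Complex.normSq_eq_norm_sq, Complex.normSq_mk]
    linarith
  refine ⟨Complex.arg ⟨a, b⟩, Complex.arg_mem_Ioc _, ?_, ?_⟩
  · rw [Complex.cos_arg (by intro h0; simp [h0] at hn), hn, div_one]
  · rw [Complex.sin_arg, hn, div_one]

lemma area_eq : μH[2] (sph '' dom) = μH[2] (cyl '' dom) :=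
  le_antisymm
    (image_le sph cyl sph' cyl' dom measurableSet_dom hasFDeriv_sph (fun x _ => hasFDeriv_cyl x)
      normDet_sph (fun x _ => normDet_cyl x) cyl_inj)
    (image_le cyl sph cyl' sph' dom measurableSet_dom (fun x _ => hasFDeriv_cyl x) hasFDeriv_sph
      (fun x _ => normDet_cyl x) normDet_sph sph_inj)

lemma circle_null (z : ℝ) :
    μH[2] (range fun t : ℝ => (!₂[Real.cos t, Real.sin t, z] : E3)) = 0 := by
  have h : ContDiff ℝ 1 fun t : ℝ => (!₂[Real.cos t, Real.sin t, z] : E3) := by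
    rw [contDiff_euclidean]
    intro i
    fin_cases i
    · exact Real.contDiff_cos
    · exact Real.contDiff_sin
    · exact contDiff_const
  have h2 := h.dimH_range_le
  have h3 := hausdorffMeasure_of_dimH_lt (d := 2) (h2.trans_lt (by simp))
  simpa using h3

lemma sphere_eq :
    μH[2] {p : E3 | p 0 ^ 2 + p 1 ^ 2 + p 2 ^ 2 = 1} = μH[2] (sph '' dom) := by
  refine le_antisymm ?_ (measure_mono ?_)
  · have hsub : {p : E3 | p 0 ^ 2 + p 1 ^ 2 + p 2 ^ 2 = 1} ⊆
        sph '' dom ∪ ({!₂[0, 0, 1]} ∪ {!₂[0, 0, -1]}) := by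
      intro p hp
      simp only [mem_ofPred_eq] at hp
      by_cases hz : p 2 ^ 2 = 1
      · right
        have h0 : p 0 = 0 := by nlinarith [sq_nonneg (p 0), sq_nonneg (p 1)]
        have h1 : p 1 = 0 := by nlinarith [sq_nonneg (p 0), sq_nonneg (p 1)]
        rcases (sq_eq_sq_iff_eq_or_eq_neg.1 (hz.trans (one_pow 2).symm)) with h | h
        · left
          ext i
          fin_cases i <;> simp [h0, h1, h]
        · right
          ext i
          fin_cases i <;> simp [h0, h1, h]
      · left
        have hpos : 0 < 1 - p 2 ^ 2 := by
          have : p 2 ^ 2 ≤ 1 := by nlinarith [sq_nonneg (p 0), sq_nonneg (p 1)]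
          have := lt_of_le_of_ne this hz
          linarith
        have hq := Real.sqrt_pos.2 hpos
        have hq2 := Real.sq_sqrt hpos.le
        obtain ⟨t, ht, hc, hs⟩ := exists_angle
          (a := p 0 / √(1 - p 2 ^ 2)) (b := p 1 / √(1 - p 2 ^ 2)) (by
            rw [div_pow, div_pow, hq2]
            field_simp
            linarith)
        refine ⟨!₂[t, p 2], ⟨ht, ?_⟩, ?_⟩
        · simp only [mem_Ioo]
          constructor <;> simp <;> nlinarith
        · ext i
          fin_cases i
          · simp [sph, hc]
            field_simp
          · simp [sph, hs]
            field_simp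
          · simp [sph]
    have := nullSingletonClass_hausdorff E3 (d := 2) (by norm_num)
    refine (measure_mono hsub).trans ((measure_union_le _ _).trans ?_)
    have h0 : μH[2] (({!₂[0, 0, 1]} ∪ {!₂[0, 0, -1]} : Set E3)) = 0 :=
      measure_union_null (measure_singleton _) (measure_singleton _)
    rw [h0, add_zero]
  · rintro _ ⟨x, hx, rfl⟩
    have h2 := Real.sq_sqrt (pos_of_dom hx).le
    have h3 := Real.sin_sq_add_cos_sq (x 0)
    simp [sph]
    linear_combination (1 - x 1 ^ 2) * h3 + (Real.cos (x 0) ^ 2 + Real.sin (x 0) ^ 2) * h2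

lemma cylinder_eq :
    μH[2] {p : E3 | p 0 ^ 2 + p 1 ^ 2 = 1 ∧ p 2 ∈ Icc (-1 : ℝ) 1} = μH[2] (cyl '' dom) := by
  refine le_antisymm ?_ (measure_mono ?_)
  · have hsub : {p : E3 | p 0 ^ 2 + p 1 ^ 2 = 1 ∧ p 2 ∈ Icc (-1 : ℝ) 1} ⊆
        cyl '' dom ∪ ((range fun t : ℝ => (!₂[Real.cos t, Real.sin t, 1] : E3)) ∪
          (range fun t : ℝ => (!₂[Real.cos t, Real.sin t, -1] : E3))) := by
      rintro p ⟨hp, hz1, hz2⟩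
      obtain ⟨t, ht, hc, hs⟩ := exists_angle hp
      rcases hz1.eq_or_lt with h | h
      · right; right
        refine ⟨t, ?_⟩
        ext i
        fin_cases i <;> simp [hc, hs, ← h]
      rcases hz2.eq_or_lt with h' | h'
      · right; left
        refine ⟨t, ?_⟩
        ext i
        fin_cases i <;> simp [hc, hs, h']
      left
      refine ⟨!₂[t, p 2], ⟨ht, h, h'⟩, ?_⟩
      ext i
      fin_cases i <;> simp [cyl, hc, hs]
    refine (measure_mono hsub).trans ((measure_union_le _ _).trans ?_)
    rw [measure_union_null (circle_null 1) (circle_null (-1)), add_zero]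
  · rintro _ ⟨x, hx, rfl⟩
    refine ⟨?_, ?_⟩
    · simp [cyl]
    · exact Ioo_subset_Icc_self hx.2

end Archimedes



/-- **Archimedes** (special case of the Duistermaat–Heckman theorem): the
2-dimensional Hausdorff measure (surface area) of the unit sphere in `ℝ³`
equals that of the lateral surface of the circumscribed cylinder. -/
theorem archimedes_sphere_eq_cylinder :
    μH[2] {p : EuclideanSpace ℝ (Fin 3) | p 0 ^ 2 + p 1 ^ 2 + p 2 ^ 2 = 1}
      = μH[2] {p : EuclideanSpace ℝ (Fin 3) |
          p 0 ^ 2 + p 1 ^ 2 = 1 ∧ p 2 ∈ Set.Icc (-1 : ℝ) 1} := by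
  rw [Archimedes.sphere_eq, Archimedes.cylinder_eq, Archimedes.area_eq]
end
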